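/- arXiv:2501.13143 — 12 statements merged into one kernel-verified Lean document; each statement's English description precedes it below -/
import Mathlib

section
/- Let S be a nonempty finite set, ν a capacity on S, and n ≥ 1 a natural number. Then Δ_B ν(A) ≥ 0 for all A, B ⊆ S with B nonempty and |B| ≤ n if and only if ν is n-monotone, i.e., for every family of sets A₁, …, Aₙ ⊆ S one has ν(⋃_{i=1}^n A_i) ≥ ∑_{∅ ≠ I ⊆ {1,…,n}} (−1)^{|I|+1} ν(⋂_{i ∈ I} A_i). -/
section helpers
variable {Ω : Type*} [DecidableEq Ω]

/-- One-step difference. -/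
def capT (N : Finset Ω) (f : Finset Ω → ℝ) : Finset Ω → ℝ := fun U => f U - f (U \ N)

/-- Iterated difference as an alternating sum. -/
def capD {ι : Type*} (s : Finset ι) (N : ι → Finset Ω) (f : Finset Ω → ℝ) (U : Finset Ω) : ℝ :=
  ∑ I ∈ s.powerset, (-1 : ℝ) ^ I.card * f (U \ I.sup N)

/-- All iterated one-point differences of order `k` are nonnegative. -/
def capGood : ℕ → (Finset Ω → ℝ) → Prop
  | 0, f => ∀ U, 0 ≤ f U
  | k + 1, f => ∀ x, capGood k (capT {x} f)

theorem capD_insert {ι : Type*} [DecidableEq ι] (s : Finset ι) (i : ι) (hi : i ∉ s)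
    (N : ι → Finset Ω) (f : Finset Ω → ℝ) (U : Finset Ω) :
    capD (insert i s) N f U = capD s N (capT (N i) f) U := by
  unfold capD capT
  rw [Finset.sum_powerset_insert hi, ← Finset.sum_add_distrib]
  refine Finset.sum_congr rfl fun I hI => ?_
  have : i ∉ I := fun h => hi (Finset.mem_powerset.1 hI h)
  rw [Finset.card_insert_of_notMem this, Finset.sup_insert]
  have : U \ (N i ⊔ I.sup N) = (U \ I.sup N) \ N i := by
    ext y; simp only [Finset.mem_sdiff, Finset.sup_eq_union, Finset.mem_union]; tauto
  rw [this]; ring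

theorem capGood_zero (k : ℕ) : capGood k (fun _ : Finset Ω => (0 : ℝ)) := by
  induction k with
  | zero => intro U; simp
  | succ k ih => intro x; convert ih using 1; funext U; simp [capT]

theorem capGood_add (k : ℕ) : ∀ (f g : Finset Ω → ℝ), capGood k f → capGood k g →
    capGood k (fun U => f U + g U) := by
  induction k with
  | zero => intro f g hf hg U; exact add_nonneg (hf U) (hg U)
  | succ k ih =>
    intro f g hf hg x
    have := ih _ _ (hf x) (hg x)
    convert this using 1
    funext U; simp only [capT]; ring

theorem capGood_comp (k : ℕ) (M : Finset Ω) : ∀ (f : Finset Ω → ℝ), capGood k f →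
    capGood k (fun U => f (U \ M)) := by
  induction k with
  | zero => intro f hf U; exact hf _
  | succ k ih =>
    intro f hf x
    have := ih _ (hf x)
    convert this using 1
    funext U; simp only [capT]; rw [sdiff_right_comm]

theorem capGood_T (k : ℕ) (f : Finset Ω → ℝ) (hf : capGood (k + 1) f) (N : Finset Ω) :
    capGood k (capT N f) := by
  induction N using Finset.induction_on with
  | empty => convert capGood_zero (Ω := Ω) k using 1; funext U; simp [capT]
  | insert x N hx ih =>
    have := capGood_add k _ _ (hf x) (capGood_comp k {x} _ ih)
    convert this using 1
    funext U
    have : U \ insert x N = (U \ {x}) \ N := by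
      ext y; simp only [Finset.mem_sdiff, Finset.mem_insert, Finset.mem_singleton]; tauto
    simp only [capT]; rw [this]; ring

theorem capD_nonneg {ι : Type*} [DecidableEq ι] (N : ι → Finset Ω) (s : Finset ι) :
    ∀ (f : Finset Ω → ℝ), capGood s.card f → ∀ U, 0 ≤ capD s N f U := by
  induction s using Finset.induction_on with
  | empty => intro f hf U; simpa [capD] using hf U
  | insert i s hi ih =>
    intro f hf U
    rw [capD_insert s i hi]
    rw [Finset.card_insert_of_notMem hi] at hf
    exact ih _ (capGood_T _ _ hf _) U

theorem capT_idem (x : Ω) (f : Finset Ω → ℝ) : capT {x} (capT {x} f) = capT {x} f := by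
  funext U; simp [capT]

theorem capGood_of (k : ℕ) : ∀ f : Finset Ω → ℝ,
    (∀ U B : Finset Ω, B.card ≤ k → B ⊆ U → 0 ≤ capD B (fun x => {x}) f U) → capGood k f := by
  induction k with
  | zero => intro f h U; simpa [capD] using h U ∅ (by simp) (by simp)
  | succ k ih =>
    intro f h x
    refine ih _ fun U B hB hBU => ?_
    by_cases hxB : x ∈ B
    · have e := capD_insert (B.erase x) x (by simp) (fun x => {x}) f U
      have e2 := capD_insert (B.erase x) x (by simp) (fun x => {x}) (capT {x} f) U
      rw [Finset.insert_erase hxB] at e e2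
      rw [e2, capT_idem, ← e]
      exact h U B (by omega) hBU
    · by_cases hxU : x ∈ U
      · have e := capD_insert B x hxB (fun x => {x}) f U
        rw [← e]
        exact h _ _ (by rw [Finset.card_insert_of_notMem hxB]; omega)
          (Finset.insert_subset hxU hBU)
      · apply le_of_eq
        symm
        refine Finset.sum_eq_zero fun I _ => ?_
        have : (U \ I.sup fun x => {x}) \ {x} = (U \ I.sup fun x => {x}) := by
          rw [Finset.sdiff_singleton_eq_erase, Finset.erase_eq_of_notMem]
          simp [hxU]
        simp only [capT]; rw [this]; simp

theorem cap_deriv (f : Finset Ω → ℝ) (A B : Finset Ω) :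
    ∑ C ∈ B.powerset, (-1 : ℝ) ^ ((B \ C).card) * f ((A \ B) ∪ C)
      = capD B (fun x => {x}) f (A ∪ B) := by
  unfold capD
  refine Finset.sum_bij' (fun C _ => B \ C) (fun C _ => B \ C) ?_ ?_ ?_ ?_ ?_
  · intro C _; simp
  · intro C _; simp
  · intro C hC; simpa using hC
  · intro C hC; simpa using hC
  · intro C hC
    have hC := Finset.mem_powerset.1 hC
    congr 2
    ext y
    have := @hC y
    simp only [Finset.mem_union, Finset.mem_sdiff, Finset.mem_sup, Finset.mem_singleton,
      exists_eq_right_right, exists_eq_right']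
    tauto

theorem cap_split {ι : Type*} [DecidableEq ι] (s : Finset ι) (g : Finset ι → ℝ) :
    ∑ I ∈ s.powerset, (-1 : ℝ) ^ I.card * g I
      = g ∅ - ∑ I ∈ s.powerset.filter (fun I => I.Nonempty), (-1 : ℝ) ^ (I.card + 1) * g I := by
  rw [← Finset.sum_filter_add_sum_filter_not s.powerset (fun I => I.Nonempty)]
  have : s.powerset.filter (fun I => ¬ I.Nonempty) = {∅} := by
    ext I; simp only [Finset.mem_filter, Finset.mem_powerset, Finset.not_nonempty_iff_eq_empty,
      Finset.mem_singleton]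
    constructor
    · exact fun h => h.2
    · rintro rfl; simp
  rw [this, sub_eq_add_neg, ← Finset.sum_neg_distrib, add_comm]
  congr 1
  · simp
  · refine Finset.sum_congr rfl fun I _ => ?_
    ring
end helpers

/-- For a capacity ν on a nonempty finite set S and n ≥ 1,
Δ_B ν(A) ≥ 0 for all A, B ⊆ S with B nonempty and |B| ≤ n iff ν is n-monotone. -/
theorem capacity_derivative_nonneg_iff_n_monotone
    {Ω : Type*} [Fintype Ω] [DecidableEq Ω] [Nonempty Ω]
    (ν : Finset Ω → ℝ) (hν0 : ν ∅ = 0)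
    (hmono : ∀ A B : Finset Ω, A ⊆ B → ν A ≤ ν B)
    (n : ℕ) (hn : 1 ≤ n) :
    (∀ A B : Finset Ω, B.Nonempty → B.card ≤ n →
        0 ≤ ∑ C ∈ B.powerset, (-1 : ℝ) ^ ((B \ C).card) * ν ((A \ B) ∪ C)) ↔
    (∀ A : Fin n → Finset Ω,
        (∑ I ∈ (Finset.univ : Finset (Fin n)).powerset.filter
            (fun I : Finset (Fin n) => I.Nonempty),
          (-1 : ℝ) ^ (I.card + 1) * ν (I.inf A)) ≤ ν (Finset.univ.sup A)) := by
  classical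
  constructor
  · intro h A
    have hg : capGood n ν := by
      apply capGood_of
      intro U B hB hBU
      rcases B.eq_empty_or_nonempty with rfl | hne
      · have := hmono ∅ U (by simp)
        simpa [capD, hν0] using this
      · have := h U B hne hB
        rwa [cap_deriv, Finset.union_eq_left.2 hBU] at this
    have := capD_nonneg (fun i => (A i)ᶜ) (Finset.univ : Finset (Fin n)) ν (by simpa using hg)
      (Finset.univ.sup A)
    unfold capD at this
    rw [cap_split _ (fun I => ν (Finset.univ.sup A \ I.sup fun i => (A i)ᶜ))] at this
    have e : ∀ I ∈ (Finset.univ : Finset (Fin n)).powerset.filter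
        (fun I : Finset (Fin n) => I.Nonempty),
        (-1 : ℝ) ^ (I.card + 1) * ν (Finset.univ.sup A \ I.sup fun i => (A i)ᶜ)
          = (-1 : ℝ) ^ (I.card + 1) * ν (I.inf A) := by
      intro I hI
      obtain ⟨j, hj⟩ := (Finset.mem_filter.1 hI).2
      congr 2
      ext y
      simp only [Finset.mem_sdiff, Finset.mem_sup, Finset.mem_inf, Finset.mem_compl,
        Finset.mem_univ, true_and, not_exists, not_and, not_not]
      exact ⟨fun h => h.2, fun h => ⟨⟨j, h j hj⟩, h⟩⟩
    rw [Finset.sum_congr rfl e] at this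
    simpa using this
  · intro h A B hne hB
    rw [cap_deriv]
    obtain ⟨b₀, hb₀⟩ := hne
    obtain ⟨e⟩ : Nonempty (B ↪ Fin n) :=
      Function.Embedding.nonempty_of_card_le (by simpa using hB)
    -- the family of sets
    let F : Fin n → Finset Ω := fun i =>
      if ∃ b, e b = i then (A ∪ B).filter (fun y => ∀ b, e b = i → (b : Ω) ≠ y) else ∅
    have hsup : Finset.univ.sup F ⊆ A ∪ B := by
      intro y hy
      obtain ⟨i, -, hi⟩ := Finset.mem_sup.1 hy
      simp only [F] at hi
      split_ifs at hi with hc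
      · exact (Finset.mem_filter.1 hi).1
      · simp at hi
    have h1 := (h F).trans (hmono _ _ hsup)
    unfold capD
    rw [cap_split _ (fun I => ν ((A ∪ B) \ I.sup fun x => {x}))]
    simp only [Finset.sup_empty, Finset.bot_eq_empty, Finset.sdiff_empty, sub_nonneg]
    refine le_trans (le_of_eq ?_) h1
    let E : Finset Ω → Finset (Fin n) := fun C => Finset.univ.filter fun i => ∃ b, e b = i ∧ (b : Ω) ∈ C
    let G : Finset (Fin n) → Finset Ω := fun I => (I.preimage e e.injective.injOn).map
      (Function.Embedding.subtype _)
    have hG : ∀ I x, x ∈ G I ↔ ∃ hx : x ∈ B, e ⟨x, hx⟩ ∈ I := by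
      intro I x; simp [G]
    have hE : ∀ C i, i ∈ E C ↔ ∃ b, e b = i ∧ (b : Ω) ∈ C := by
      intro C i; simp [E]
    have hGB : ∀ I, G I ⊆ B := fun I x hx => ((hG I x).1 hx).1
    have hGE : ∀ C ⊆ B, G (E C) = C := by
      intro C hC
      ext x
      rw [hG]
      constructor
      · rintro ⟨hx, h⟩
        obtain ⟨b, hb, hbC⟩ := (hE _ _).1 h
        have := e.injective hb
        subst this; exact hbC
      · intro hx
        exact ⟨hC hx, (hE _ _).2 ⟨_, rfl, hx⟩⟩
    have hcard : ∀ C ⊆ B, (E C).card = C.card := by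
      intro C hC
      symm
      refine Finset.card_bij (fun x hx => e ⟨x, hC hx⟩) ?_ ?_ ?_
      · intro x hx; exact (hE _ _).2 ⟨_, rfl, hx⟩
      · intro x hx y hy hxy; simpa using e.injective hxy
      · intro i hi
        obtain ⟨b, hb, hbC⟩ := (hE _ _).1 hi
        exact ⟨b, hbC, hb⟩
    refine Finset.sum_of_injOn E ?_ ?_ ?_ ?_
    · intro C hC D hD hCD
      simp only [Finset.coe_filter, Finset.mem_powerset, Set.mem_setOf_eq] at hC hD
      rw [← hGE C hC.1, ← hGE D hD.1, hCD]
    · intro C hC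
      simp only [Finset.coe_filter, Finset.mem_powerset, Set.mem_setOf_eq] at hC ⊢
      refine ⟨Finset.subset_univ _, ?_⟩
      rw [← Finset.card_pos, hcard C hC.1]
      exact hC.2.card_pos
    · intro I hI hnot
      obtain ⟨j, hj⟩ := (Finset.mem_filter.1 hI).2
      by_cases hall : ∀ i ∈ I, ∃ b, e b = i
      · exfalso
        apply hnot
        refine ⟨G I, ?_, ?_⟩
        · simp only [Finset.coe_filter, Finset.mem_powerset, Set.mem_setOf_eq]
          refine ⟨hGB I, ?_⟩
          obtain ⟨b, hb⟩ := hall j hj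
          exact ⟨b, (hG _ _).2 ⟨b.2, by rw [← hb] at hj; exact hj⟩⟩
        · ext i
          rw [hE]
          constructor
          · rintro ⟨b, rfl, hb⟩
            exact ((hG _ _).1 hb).2
          · intro hi
            obtain ⟨b, rfl⟩ := hall i hi
            exact ⟨b, rfl, (hG _ _).2 ⟨b.2, hi⟩⟩
      · push Not at hall
        obtain ⟨i, hi, hib⟩ := hall
        have hFi : F i = ∅ := by
          simp only [F]
          rw [if_neg]
          rintro ⟨b, hb⟩
          exact hib b hb
        have : I.inf F = ∅ := by
          have := Finset.inf_le (f := F) hi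
          rw [hFi] at this
          exact Finset.subset_empty.1 this
        rw [this, hν0, mul_zero]
    · intro C hC
      simp only [Finset.mem_filter, Finset.mem_powerset] at hC
      obtain ⟨hCB, c, hc⟩ := hC
      rw [hcard C hCB]
      congr 2
      have hF : ∀ b y, y ∈ F (e b) ↔ y ∈ A ∪ B ∧ (b : Ω) ≠ y := by
        intro b y
        simp only [F]
        rw [if_pos ⟨b, rfl⟩, Finset.mem_filter]
        simp only [e.injective.eq_iff, forall_eq]
      ext y
      rw [Finset.mem_sdiff, Finset.mem_inf]
      simp only [Finset.mem_sup, Finset.mem_singleton, exists_eq_right']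
      constructor
      · rintro ⟨hy, hyC⟩ i hi
        obtain ⟨b, rfl, hb⟩ := (hE _ _).1 hi
        rw [hF]
        exact ⟨hy, fun h => hyC (h ▸ hb)⟩
      · intro hall
        refine ⟨((hF _ _).1 (hall (e ⟨c, hCB hc⟩) ((hE _ _).2 ⟨_, rfl, hc⟩))).1, fun hy => ?_⟩
        exact ((hF _ _).1 (hall (e ⟨y, hCB hy⟩) ((hE _ _).2 ⟨_, rfl, hy⟩))).2 rfl
end

section
/- Let S be a finite set with at least two elements, ν a capacity on S with ν(S) = 1, and V the Choquet integral with respect to ν. If V is ambiguity averse, then Δ_{ω₁,ω₂}ν(A) ≥ 0 for every A ⊆ S and all distinct ω₁, ω₂ ∈ S. -/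
open MeasureTheory

/-- The Choquet integral of a nonnegative profile `y` with respect to a capacity `ν`:
`V(y) = ∫₀^∞ ν({ω : y ω ≥ t}) dt`. -/
noncomputable def choquet {Ω : Type*} [Fintype Ω] (ν : Finset Ω → ℝ) (y : Ω → ℝ) : ℝ :=
  ∫ t in Set.Ioi (0 : ℝ), ν (Finset.univ.filter fun ω => t ≤ y ω)

/-- Ambiguity aversion for a functional on nonnegative profiles over a finite state space. -/
def AmbiguityAverseC {Ω : Type*} [DecidableEq Ω] (V : (Ω → ℝ) → ℝ) : Prop :=
  ∀ (E : Finset Ω) (ω₁ ω₂ : Ω) (u₁ u₂ ub : ℝ) (y : Ω → ℝ),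
    ω₁ ∉ E → ω₂ ∉ E → ω₁ ≠ ω₂ →
    u₁ < u₂ → 0 < ub → 2 * ub < u₂ - u₁ → 0 ≤ u₁ - ub →
    (∀ ω, 0 ≤ y ω) →
    y ω₁ = u₁ → y ω₂ = u₂ →
    (∀ ω ∈ E, y ω < u₁ - ub) →
    (∀ ω, ω ∉ E → ω ≠ ω₁ → ω ≠ ω₂ → u₂ + ub < y ω) →
    V (Function.update (Function.update y ω₁ (u₁ + ub)) ω₂ (u₂ - ub)) ≥
      V (Function.update (Function.update y ω₁ (u₁ - ub)) ω₂ (u₂ + ub))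

/-- Ambiguity prudence for a functional on nonnegative profiles over a finite state space. -/
def AmbiguityPrudentC {Ω : Type*} [DecidableEq Ω] (V : (Ω → ℝ) → ℝ) : Prop :=
  ∀ (E : Finset Ω) (ω₁ ω₂ ω₃ : Ω) (u₁ u₂ u₃ ub : ℝ) (y : Ω → ℝ),
    ω₁ ∉ E → ω₂ ∉ E → ω₃ ∉ E →
    ω₁ ≠ ω₂ → ω₁ ≠ ω₃ → ω₂ ≠ ω₃ →
    u₁ < u₂ → u₂ < u₃ → u₂ - u₁ = u₃ - u₂ →
    0 < ub → 3 * ub < u₂ - u₁ → 0 ≤ u₁ - ub →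
    (∀ ω, 0 ≤ y ω) →
    y ω₁ = u₁ → y ω₂ = u₂ → y ω₃ = u₃ →
    (∀ ω ∈ E, y ω < u₁ - ub) →
    (∀ ω, ω ∉ E → ω ≠ ω₁ → ω ≠ ω₂ → ω ≠ ω₃ → u₃ + ub < y ω) →
    V (Function.update (Function.update (Function.update y ω₁ (u₁ + ub)) ω₂ (u₂ - 2 * ub)) ω₃ (u₃ + ub)) ≥
      V (Function.update (Function.update (Function.update y ω₁ (u₁ - ub)) ω₂ (u₂ + 2 * ub)) ω₃ (u₃ - ub))

/-- Second derivative of a set function. -/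
def secondDeriv {Ω : Type*} [DecidableEq Ω] (ν : Finset Ω → ℝ) (ω₁ ω₂ : Ω) (A : Finset Ω) : ℝ :=
  ν (A ∪ {ω₁, ω₂}) - ν ((A ∪ {ω₁}) \ {ω₂}) - ν ((A ∪ {ω₂}) \ {ω₁}) + ν (A \ {ω₁, ω₂})

/-- Third derivative of a set function. -/
def thirdDeriv {Ω : Type*} [DecidableEq Ω] (ν : Finset Ω → ℝ) (ω₁ ω₂ ω₃ : Ω) (A : Finset Ω) : ℝ :=
  ∑ C ∈ ({ω₁, ω₂, ω₃} : Finset Ω).powerset,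
    (-1 : ℝ) ^ (3 - C.card) * ν ((A \ {ω₁, ω₂, ω₃}) ∪ C)

lemma choquet_three {Ω : Type*} [Fintype Ω] [DecidableEq Ω]
    (ν : Finset Ω → ℝ) (hν0 : ν ∅ = 0) (B : Finset Ω) (p q : Ω)
    (a b : ℝ) (h0 : 0 ≤ a) (hab : a ≤ b) (hb : b ≤ 7) (y : Ω → ℝ)
    (hp : y p = a) (hq : y q = b) (hB : ∀ ω ∈ B, y ω = 7)
    (hE : ∀ ω, ω ∉ B → ω ≠ p → ω ≠ q → y ω = 0) :
    choquet ν y = a * ν (B ∪ {p, q}) + (b - a) * ν (B ∪ {q}) + (7 - b) * ν B := by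
  have key : ∀ t ∈ Set.Ioi (0 : ℝ), ν (Finset.univ.filter fun ω => t ≤ y ω) =
      (Set.Ioc 0 a).indicator (fun _ => ν (B ∪ {p, q})) t
      + (Set.Ioc a b).indicator (fun _ => ν (B ∪ {q})) t
      + (Set.Ioc b 7).indicator (fun _ => ν B) t := by
    intro t ht
    have ht : 0 < t := ht
    have hBy : ∀ ω, ω ∈ B → y ω = 7 := hB
    rcases le_or_gt t a with h1 | h1
    · have e : (Finset.univ.filter fun ω => t ≤ y ω) = B ∪ {p, q} := by
        ext ω
        simp only [Finset.mem_filter, Finset.mem_univ, true_and, Finset.mem_union,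
          Finset.mem_insert, Finset.mem_singleton]
        by_cases c1 : ω = p <;> by_cases c2 : ω = q <;> by_cases c3 : ω ∈ B <;> grind
      rw [e]
      simp [Set.indicator, ht, h1, not_lt.2 h1, not_lt.2 (h1.trans hab)]
    rcases le_or_gt t b with h2 | h2
    · have e : (Finset.univ.filter fun ω => t ≤ y ω) = B ∪ {q} := by
        ext ω
        simp only [Finset.mem_filter, Finset.mem_univ, true_and, Finset.mem_union,
          Finset.mem_singleton]
        by_cases c1 : ω = p <;> by_cases c2 : ω = q <;> by_cases c3 : ω ∈ B <;> grind
      rw [e]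
      simp [Set.indicator, h1, h2, not_le.2 h1, not_lt.2 h2]
    rcases le_or_gt t 7 with h3 | h3
    · have e : (Finset.univ.filter fun ω => t ≤ y ω) = B := by
        ext ω
        simp only [Finset.mem_filter, Finset.mem_univ, true_and]
        by_cases c1 : ω = p <;> by_cases c2 : ω = q <;> by_cases c3 : ω ∈ B <;> grind
      rw [e]
      simp [Set.indicator, h2, h3, not_le.2 h1, not_le.2 h2]
    · have e : (Finset.univ.filter fun ω => t ≤ y ω) = ∅ := by
        ext ω
        simp only [Finset.mem_filter, Finset.mem_univ, true_and, Finset.notMem_empty]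
        by_cases c1 : ω = p <;> by_cases c2 : ω = q <;> by_cases c3 : ω ∈ B <;> grind
      rw [e]
      simp [Set.indicator, hν0, not_le.2 h1, not_le.2 h2, not_le.2 h3]
  have I : ∀ (l r c : ℝ), Integrable ((Set.Ioc l r).indicator (fun _ => c))
      (volume.restrict (Set.Ioi (0:ℝ))) := by
    intro l r c
    apply Integrable.integrableOn
    rw [integrable_indicator_iff measurableSet_Ioc]
    exact integrableOn_const (by simp)
  have J : ∀ (l r c : ℝ), 0 ≤ l → l ≤ r →
      ∫ t in Set.Ioi (0:ℝ), (Set.Ioc l r).indicator (fun _ => c) t = (r - l) * c := by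
    intro l r c hl hr
    rw [setIntegral_indicator measurableSet_Ioc]
    have : Set.Ioi (0:ℝ) ∩ Set.Ioc l r = Set.Ioc l r :=
      Set.inter_eq_right.2 fun x hx => lt_of_le_of_lt hl hx.1
    rw [this]
    simp [hr]
  unfold choquet
  rw [setIntegral_congr_fun measurableSet_Ioi key]
  have K := integral_add ((I 0 a (ν (B ∪ {p, q}))).add (I a b (ν (B ∪ {q})))) (I b 7 (ν B))
  simp only [Pi.add_apply] at K
  rw [K, integral_add (I _ _ _) (I _ _ _), J _ _ _ le_rfl h0, J _ _ _ h0 hab, J _ _ _ (h0.trans hab) hb]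
  ring

lemma averse_half {Ω : Type*} [Fintype Ω] [DecidableEq Ω]
    (ν : Finset Ω → ℝ) (hν0 : ν ∅ = 0) (hAA : AmbiguityAverseC (choquet ν))
    (B : Finset Ω) (p q : Ω) (hpq : p ≠ q) (hp : p ∉ B) (hq : q ∉ B) :
    0 ≤ ν (B ∪ {p, q}) - 2 * ν (B ∪ {q}) + ν B := by
  have h := hAA (B ∪ {p, q})ᶜ p q 2 5 1
    (fun ω => if ω = p then 2 else if ω = q then 5 else if ω ∈ B then 7 else 0)
    (by simp) (by simp) hpq (by norm_num) (by norm_num) (by norm_num) (by norm_num)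
    (by intro ω; split_ifs <;> norm_num) (by simp) (by simp [hpq.symm])
    (by intro ω hω; simp at hω; simp [hω])
    (by
      intro ω h1 h2 h3
      have : ω ∈ B := by simpa [h2, h3] using h1
      simp [h2, h3, this]; norm_num)
  rw [choquet_three ν hν0 B p q (2+1) (5-1) (by norm_num) (by norm_num) (by norm_num),
    choquet_three ν hν0 B p q (2-1) (5+1) (by norm_num) (by norm_num) (by norm_num)] at h
  · linarith
  all_goals first
    | (simp [hpq]; done)
    | (intro ω hω
       have h1 : ω ≠ p := fun e => hp (e ▸ hω)
       have h2 : ω ≠ q := fun e => hq (e ▸ hω)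
       simp [h1, h2, hω]; done)
    | (intro ω hω h1 h2
       simp [h1, h2, hω])

/-- If the Choquet integral of a capacity ν (with ν(S)=1) on a finite set with
at least two elements is ambiguity averse, then the second derivative of ν is nonnegative. -/
theorem CEU_ambiguityAverse_implies_secondDeriv_nonneg
    {Ω : Type*} [Fintype Ω] [DecidableEq Ω]
    (hcard : 2 ≤ Fintype.card Ω)
    (ν : Finset Ω → ℝ) (hν0 : ν ∅ = 0) (hν1 : ν Finset.univ = 1)
    (hmono : ∀ A B : Finset Ω, A ⊆ B → ν A ≤ ν B)
    (hAA : AmbiguityAverseC (choquet ν)) :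
    ∀ (A : Finset Ω) (ω₁ ω₂ : Ω), ω₁ ≠ ω₂ → 0 ≤ secondDeriv ν ω₁ ω₂ A := by
  intro A ω₁ ω₂ hne
  have h1 := averse_half ν hν0 hAA (A \ {ω₁, ω₂}) ω₁ ω₂ hne (by simp) (by simp)
  have h2 := averse_half ν hν0 hAA (A \ {ω₁, ω₂}) ω₂ ω₁ hne.symm (by simp) (by simp)
  have e1 : A \ {ω₁, ω₂} ∪ {ω₁, ω₂} = A ∪ {ω₁, ω₂} := by grind
  have e2 : A \ {ω₁, ω₂} ∪ {ω₂, ω₁} = A ∪ {ω₁, ω₂} := by grind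
  have e3 : A \ {ω₁, ω₂} ∪ {ω₁} = (A ∪ {ω₁}) \ {ω₂} := by grind
  have e4 : A \ {ω₁, ω₂} ∪ {ω₂} = (A ∪ {ω₂}) \ {ω₁} := by grind
  rw [e1, e4] at h1
  rw [e2, e3] at h2
  unfold secondDeriv
  linarith
end

section
/- Let S be a finite set with at least two elements, ν a capacity on S with ν(S) = 1, and V the Choquet integral with respect to ν. Suppose V(y ∘ σ) = V(y) for every permutation σ of S and every nonnegative profile y : S → [0,∞) (the symmetry assumption), and suppose Δ_{ω₁,ω₂}ν(A) ≥ 0 for every A ⊆ S and all distinct ω₁, ω₂ ∈ S. Then V is ambiguity averse. -/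
open MeasureTheory

/-- The Choquet integrand is integrable on `(0, ∞)`. -/
lemma choquet_integrable {Ω : Type*} [Fintype Ω]
    (ν : Finset Ω → ℝ) (hν0 : ν ∅ = 0)
    (hmono : ∀ A B : Finset Ω, A ⊆ B → ν A ≤ ν B) (y : Ω → ℝ) :
    IntegrableOn (fun t : ℝ => ν (Finset.univ.filter fun ω => t ≤ y ω)) (Set.Ioi 0) := by
  have hanti : Antitone (fun t : ℝ => ν (Finset.univ.filter fun ω => t ≤ y ω)) := by
    intro s t hst
    apply hmono
    intro ω
    simp only [Finset.mem_filter, Finset.mem_univ, true_and]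
    exact fun h => hst.trans h
  obtain ⟨M, hM⟩ : ∃ M : ℝ, ∀ ω, y ω ≤ M :=
    ⟨∑ ω, |y ω|, fun ω => (le_abs_self _).trans
      (Finset.single_le_sum (f := fun ω => |y ω|) (fun i _ => abs_nonneg _) (Finset.mem_univ ω))⟩
  have h1 : IntegrableOn (fun t : ℝ => ν (Finset.univ.filter fun ω => t ≤ y ω)) (Set.Icc 0 M) :=
    (hanti.antitoneOn _).integrableOn_isCompact isCompact_Icc
  have h2 : IntegrableOn (fun t : ℝ => ν (Finset.univ.filter fun ω => t ≤ y ω)) (Set.Ioi M) := by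
    refine (integrableOn_zero : IntegrableOn (fun _ : ℝ => (0:ℝ)) (Set.Ioi M)).congr_fun ?_ measurableSet_Ioi
    intro t ht
    have : (Finset.univ.filter fun ω => t ≤ y ω) = ∅ := by
      apply Finset.filter_false_of_mem
      intro ω _ h
      exact absurd (hM ω) (not_le.2 (lt_of_lt_of_le ht h))
    simp [this, hν0]
  refine (h1.union h2).mono_set ?_
  intro t ht
  rcases le_or_gt t M with h | h
  · exact Or.inl ⟨le_of_lt ht, h⟩
  · exact Or.inr h

/-- The Choquet integral of an indicator is the capacity of the set. -/
lemma choquet_indicator {Ω : Type*} [Fintype Ω] [DecidableEq Ω]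
    (ν : Finset Ω → ℝ) (hν0 : ν ∅ = 0) (A : Finset Ω) :
    choquet ν (fun ω => if ω ∈ A then 1 else 0) = ν A := by
  unfold choquet
  have : Set.EqOn (fun t : ℝ => ν (Finset.univ.filter fun ω => t ≤ if ω ∈ A then 1 else 0))
      ((Set.Ioc (0:ℝ) 1).indicator fun _ => ν A) (Set.Ioi 0) := by
    intro t ht
    have ht0 : 0 < t := ht
    by_cases h : t ≤ 1
    · rw [Set.indicator_of_mem (show t ∈ Set.Ioc (0:ℝ) 1 from ⟨ht, h⟩)]
      show ν _ = ν A
      congr 1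
      ext ω
      by_cases hω : ω ∈ A <;> simp [hω, h, ht0]
    · rw [Set.indicator_of_notMem (fun hh => h hh.2)]
      show ν _ = 0
      refine Eq.trans ?_ hν0
      congr 1
      ext ω
      by_cases hω : ω ∈ A <;> simp [hω, ht0, lt_of_not_ge h]
  rw [setIntegral_congr_fun measurableSet_Ioi this, setIntegral_indicator measurableSet_Ioc,
    Set.inter_eq_self_of_subset_right (fun t ht => ht.1)]
  simp

/-- Integral of a constant supported on an interval. -/
lemma integral_ind (a b c : ℝ) (ha : 0 ≤ a) (hab : a ≤ b) :
    ∫ t in Set.Ioi (0:ℝ), (Set.Ioc a b).indicator (fun _ => c) t = (b - a) * c := by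
  rw [setIntegral_indicator measurableSet_Ioc,
    Set.inter_eq_self_of_subset_right
      (show Set.Ioc a b ⊆ Set.Ioi 0 from fun t ht => lt_of_le_of_lt ha ht.1)]
  simp [hab]

lemma integrable_ind (a b c : ℝ) :
    IntegrableOn ((Set.Ioc a b).indicator (fun _ => c)) (Set.Ioi (0:ℝ)) := by
  refine Integrable.integrableOn ?_
  rw [integrable_indicator_iff measurableSet_Ioc]
  simp

/-- If the Choquet integral of a capacity ν (with ν(S)=1) is symmetric under
permutations of the states (on nonnegative profiles) and the second derivative of ν is
nonnegative, then the Choquet integral is ambiguity averse. -/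
theorem CEU_secondDeriv_nonneg_implies_ambiguityAverse
    {Ω : Type*} [Fintype Ω] [DecidableEq Ω]
    (hcard : 2 ≤ Fintype.card Ω)
    (ν : Finset Ω → ℝ) (hν0 : ν ∅ = 0) (hν1 : ν Finset.univ = 1)
    (hmono : ∀ A B : Finset Ω, A ⊆ B → ν A ≤ ν B)
    (hsym : ∀ (σ : Equiv.Perm Ω) (y : Ω → ℝ), (∀ ω, 0 ≤ y ω) →
      choquet ν (fun ω => y (σ ω)) = choquet ν y)
    (hd2 : ∀ (A : Finset Ω) (ω₁ ω₂ : Ω), ω₁ ≠ ω₂ → 0 ≤ secondDeriv ν ω₁ ω₂ A) :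
    AmbiguityAverseC (choquet ν) := by
  intro E ω₁ ω₂ u₁ u₂ ub y h1E h2E h12 hu hub h2ub hpos hy hy1 hy2 hE hF
  set F : Finset Ω := Finset.univ.filter fun ω => ω ∉ E ∧ ω ≠ ω₁ ∧ ω ≠ ω₂ with hFdef
  have hswap : ν (insert ω₁ F) = ν (insert ω₂ F) := by
    have h := hsym (Equiv.swap ω₁ ω₂) (fun ω => if ω ∈ insert ω₁ F then 1 else 0)
      (fun ω => by split_ifs <;> norm_num)
    rw [choquet_indicator ν hν0] at h
    rw [← h, ← choquet_indicator ν hν0 (insert ω₂ F)]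
    congr 1
    funext ω
    have : Equiv.swap ω₁ ω₂ ω ∈ insert ω₁ F ↔ ω ∈ insert ω₂ F := by
      by_cases h1 : ω = ω₁
      · subst h1; simp [hFdef, h12, h12.symm]
      · by_cases h2 : ω = ω₂
        · subst h2; simp
        · rw [Equiv.swap_apply_of_ne_of_ne h1 h2]; simp [h1, h2]
    simp only [this]
  have hd := hd2 F ω₁ ω₂ h12
  unfold secondDeriv at hd
  have e1 : F ∪ {ω₁, ω₂} = insert ω₁ (insert ω₂ F) := by ext ω; simp
  have e2 : (F ∪ {ω₁}) \ {ω₂} = insert ω₁ F := by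
    ext ω; simp [hFdef]; grind
  have e3 : (F ∪ {ω₂}) \ {ω₁} = insert ω₂ F := by
    ext ω; simp [hFdef]; grind
  have e4 : F \ {ω₁, ω₂} = F := by
    ext ω; simp [hFdef]
  rw [e1, e2, e3, e4, hswap] at hd
  set c₁ := ν (insert ω₁ (insert ω₂ F)) - ν (insert ω₂ F) with hc1
  set c₂ := ν F - ν (insert ω₂ F) with hc2
  set yA := Function.update (Function.update y ω₁ (u₁ - ub)) ω₂ (u₂ + ub) with hyA
  set yB := Function.update (Function.update y ω₁ (u₁ + ub)) ω₂ (u₂ - ub) with hyB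
  have A1 : yA ω₁ = u₁ - ub := by simp [hyA, Function.update_of_ne h12]
  have A2 : yA ω₂ = u₂ + ub := by simp [hyA]
  have A3 : ∀ ω, ω ≠ ω₁ → ω ≠ ω₂ → yA ω = y ω := fun ω h h' => by simp [hyA, h, h']
  have B1 : yB ω₁ = u₁ + ub := by simp [hyB, Function.update_of_ne h12]
  have B2 : yB ω₂ = u₂ - ub := by simp [hyB]
  have B3 : ∀ ω, ω ≠ ω₁ → ω ≠ ω₂ → yB ω = y ω := fun ω h h' => by simp [hyB, h, h']
  clear_value yA yB
  have memF : ∀ ω, ω ∈ F ↔ (ω ∉ E ∧ ω ≠ ω₁ ∧ ω ≠ ω₂) := fun ω => by simp [hFdef]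
  clear_value F
  have key : ∀ t : ℝ, ν (Finset.univ.filter fun ω => t ≤ yB ω) =
      ν (Finset.univ.filter fun ω => t ≤ yA ω)
        + (Set.Ioc (u₁ - ub) (u₁ + ub)).indicator (fun _ => c₁) t
        + (Set.Ioc (u₂ - ub) (u₂ + ub)).indicator (fun _ => c₂) t := by
    intro t
    by_cases I1 : t ∈ Set.Ioc (u₁ - ub) (u₁ + ub)
    · have I2 : t ∉ Set.Ioc (u₂ - ub) (u₂ + ub) := fun h => by
        have := h.1; have := I1.2; linarith
      rw [Set.indicator_of_mem I1, Set.indicator_of_notMem I2]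
      obtain ⟨l, r⟩ := I1
      have sB : (Finset.univ.filter fun ω => t ≤ yB ω) = insert ω₁ (insert ω₂ F) := by
        ext ω
        simp only [Finset.mem_filter, Finset.mem_univ, true_and, Finset.mem_insert, memF]
        grind
      have sA : (Finset.univ.filter fun ω => t ≤ yA ω) = insert ω₂ F := by
        ext ω
        simp only [Finset.mem_filter, Finset.mem_univ, true_and, Finset.mem_insert, memF]
        grind
      rw [sB, sA, hc1]; ring
    · by_cases I2 : t ∈ Set.Ioc (u₂ - ub) (u₂ + ub)
      · rw [Set.indicator_of_notMem I1, Set.indicator_of_mem I2]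
        obtain ⟨l, r⟩ := I2
        have sB : (Finset.univ.filter fun ω => t ≤ yB ω) = F := by
          ext ω
          simp only [Finset.mem_filter, Finset.mem_univ, true_and, memF]
          grind
        have sA : (Finset.univ.filter fun ω => t ≤ yA ω) = insert ω₂ F := by
          ext ω
          simp only [Finset.mem_filter, Finset.mem_univ, true_and, Finset.mem_insert, memF]
          grind
        rw [sB, sA, hc2]; ring
      · rw [Set.indicator_of_notMem I1, Set.indicator_of_notMem I2, add_zero, add_zero]
        congr 1
        ext ω
        simp only [Finset.mem_filter, Finset.mem_univ, true_and]
        simp only [Set.mem_Ioc] at I1 I2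
        grind
  have hV : choquet ν yB = choquet ν yA + (u₁ + ub - (u₁ - ub)) * c₁
      + (u₂ + ub - (u₂ - ub)) * c₂ := by
    unfold choquet
    have hA := choquet_integrable ν hν0 hmono yA
    have i1 := integrable_ind (u₁ - ub) (u₁ + ub) c₁
    have i2 := integrable_ind (u₂ - ub) (u₂ + ub) c₂
    simp_rw [key]
    have hA1 : IntegrableOn (fun t : ℝ => ν (Finset.univ.filter fun ω => t ≤ yA ω)
        + (Set.Ioc (u₁ - ub) (u₁ + ub)).indicator (fun _ => c₁) t) (Set.Ioi 0) := hA.add i1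
    rw [integral_add hA1 i2, integral_add hA i1,
      integral_ind _ _ _ hpos (by linarith), integral_ind _ _ _ (by linarith) (by linarith)]
  have : 0 ≤ ub * (c₁ + c₂) := mul_nonneg hub.le (by rw [hc1, hc2]; linarith)
  rw [ge_iff_le, hV]
  linarith
end

section
/- Let S be a finite set with at least three elements, ν a capacity on S with ν(S) = 1, and V the Choquet integral with respect to ν. If V is ambiguity prudent, then Δ_{ω₁,ω₂,ω₃}ν(A) ≥ 0 for every A ⊆ S and all distinct ω₁, ω₂, ω₃ ∈ S. -/
open MeasureTheory

lemma aux_integrable (a b c : ℝ) :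
    Integrable ((Set.Ioc a b).indicator (fun _ : ℝ => c)) (volume.restrict (Set.Ioi (0:ℝ))) := by
  apply Integrable.restrict
  rw [integrable_indicator_iff measurableSet_Ioc]
  exact integrableOn_const (by simp)

lemma aux_integral (a b c : ℝ) (ha : 0 ≤ a) (hab : a ≤ b) :
    ∫ t in Set.Ioi (0:ℝ), (Set.Ioc a b).indicator (fun _ : ℝ => c) t = (b - a) * c := by
  rw [setIntegral_indicator measurableSet_Ioc]
  have : Set.Ioi (0:ℝ) ∩ Set.Ioc a b = Set.Ioc a b := by
    apply Set.inter_eq_right.2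
    intro x hx
    exact lt_of_le_of_lt ha hx.1
  rw [this]
  simp [hab]

lemma aux_choquet {Ω : Type*} [Fintype Ω] [DecidableEq Ω]
    (ν : Finset Ω → ℝ) (hν0 : ν ∅ = 0) (F : Finset Ω) (a b c : Ω)
    (hab : a ≠ b) (hac : a ≠ c) (hbc : b ≠ c) (ha : a ∉ F) (hb : b ∉ F) (hc : c ∉ F)
    (p q r : ℝ) (hp : 0 < p) (hpq : p < q) (hqr : q < r) (hr : r < 12) (y : Ω → ℝ)
    (ya : y a = p) (yb : y b = q) (yc : y c = r) (yF : ∀ ω ∈ F, y ω = 12)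
    (yE : ∀ ω, ω ∉ F → ω ≠ a → ω ≠ b → ω ≠ c → y ω = 0) :
    choquet ν y = p * ν (F ∪ {a, b, c}) + (q - p) * ν (F ∪ {b, c}) + (r - q) * ν (F ∪ {c})
      + (12 - r) * ν F := by
  unfold choquet
  have key : ∀ t ∈ Set.Ioi (0:ℝ), ν (Finset.univ.filter fun ω => t ≤ y ω) =
      (Set.Ioc 0 p).indicator (fun _ : ℝ => ν (F ∪ {a, b, c})) t
      + (Set.Ioc p q).indicator (fun _ : ℝ => ν (F ∪ {b, c})) t
      + (Set.Ioc q r).indicator (fun _ : ℝ => ν (F ∪ {c})) t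
      + (Set.Ioc r 12).indicator (fun _ : ℝ => ν F) t := by
    intro t ht
    have ht : 0 < t := ht
    have hcl : ∀ ω, (ω ∈ F ∧ y ω = 12 ∧ ω ≠ a ∧ ω ≠ b ∧ ω ≠ c) ∨ (ω = a) ∨ (ω = b) ∨ (ω = c) ∨
        (ω ∉ F ∧ ω ≠ a ∧ ω ≠ b ∧ ω ≠ c ∧ y ω = 0) := by
      intro ω
      grind
    simp only [Set.indicator_apply, Set.mem_Ioc]
    rcases le_or_gt t p with h1 | h1
    · rw [if_pos ⟨ht, h1⟩, if_neg (by grind), if_neg (by grind), if_neg (by grind)]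
      have : (Finset.univ.filter fun ω => t ≤ y ω) = F ∪ {a, b, c} := by
        ext ω
        simp only [Finset.mem_filter, Finset.mem_univ, true_and, Finset.mem_union,
          Finset.mem_insert, Finset.mem_singleton]
        grind
      rw [this]; ring
    rcases le_or_gt t q with h2 | h2
    · rw [if_neg (by grind), if_pos ⟨h1, h2⟩, if_neg (by grind), if_neg (by grind)]
      have : (Finset.univ.filter fun ω => t ≤ y ω) = F ∪ {b, c} := by
        ext ω
        simp only [Finset.mem_filter, Finset.mem_univ, true_and, Finset.mem_union,
          Finset.mem_insert, Finset.mem_singleton]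
        grind
      rw [this]; ring
    rcases le_or_gt t r with h3 | h3
    · rw [if_neg (by grind), if_neg (by grind), if_pos ⟨h2, h3⟩, if_neg (by grind)]
      have : (Finset.univ.filter fun ω => t ≤ y ω) = F ∪ {c} := by
        ext ω
        simp only [Finset.mem_filter, Finset.mem_univ, true_and, Finset.mem_union,
          Finset.mem_singleton]
        grind
      rw [this]; ring
    rcases le_or_gt t 12 with h4 | h4
    · rw [if_neg (by grind), if_neg (by grind), if_neg (by grind), if_pos ⟨h3, h4⟩]
      have : (Finset.univ.filter fun ω => t ≤ y ω) = F := by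
        ext ω
        simp only [Finset.mem_filter, Finset.mem_univ, true_and]
        grind
      rw [this]; ring
    · rw [if_neg (by grind), if_neg (by grind), if_neg (by grind), if_neg (by grind)]
      have : (Finset.univ.filter fun ω => t ≤ y ω) = ∅ := by
        ext ω
        simp only [Finset.mem_filter, Finset.mem_univ, true_and, Finset.notMem_empty]
        grind
      rw [this, hν0]; ring
  rw [setIntegral_congr_fun measurableSet_Ioi key]
  have i1 := aux_integrable 0 p (ν (F ∪ {a, b, c}))
  have i2 := aux_integrable p q (ν (F ∪ {b, c}))
  have i3 := aux_integrable q r (ν (F ∪ {c}))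
  have i4 := aux_integrable r 12 (ν F)
  rw [integral_add (by exact (i1.add i2).add i3) i4, integral_add (by exact i1.add i2) i3,
    integral_add i1 i2,
    aux_integral _ _ _ (by linarith) (by linarith), aux_integral _ _ _ (by linarith) (by linarith),
    aux_integral _ _ _ (by linarith) (by linarith), aux_integral _ _ _ (by linarith) (by linarith)]
  ring

lemma aux_chain {Ω : Type*} [Fintype Ω] [DecidableEq Ω]
    (ν : Finset Ω → ℝ) (hν0 : ν ∅ = 0) (hAP : AmbiguityPrudentC (choquet ν))
    (F : Finset Ω) (a b c : Ω)
    (hab : a ≠ b) (hac : a ≠ c) (hbc : b ≠ c) (ha : a ∉ F) (hb : b ∉ F) (hc : c ∉ F) :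
    0 ≤ ν (F ∪ {a, b, c}) - 3 * ν (F ∪ {b, c}) + 3 * ν (F ∪ {c}) - ν F := by
  let y : Ω → ℝ := fun ω => if ω ∈ F then 12 else if ω = a then 2 else if ω = b then 6 else
    if ω = c then 10 else 0
  have h := hAP (Finset.univ \ (F ∪ {a, b, c})) a b c 2 6 10 1 y (by simp) (by simp) (by simp)
    hab hac hbc (by norm_num) (by norm_num) (by norm_num) (by norm_num) (by norm_num)
    (by norm_num) (by intro ω; simp only [y]; split_ifs <;> norm_num)
    (by simp [y, ha]) (by simp [y, hb, hab.symm]) (by simp [y, hc, hac.symm, hbc.symm])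
    (by
      intro ω hω
      simp only [Finset.mem_sdiff, Finset.mem_univ, true_and, Finset.mem_union,
          Finset.mem_insert, Finset.mem_singleton, not_or] at hω
      simp [y, hω])
    (by
      intro ω hω h1 h2 h3
      have : ω ∈ F := by
        simp only [Finset.mem_sdiff, Finset.mem_univ, true_and, Finset.mem_union,
          Finset.mem_insert, Finset.mem_singleton] at hω
        tauto
      simp only [y, this, if_true]; norm_num)
  rw [aux_choquet ν hν0 F a b c hab hac hbc ha hb hc 3 4 11 (by norm_num) (by norm_num)
      (by norm_num) (by norm_num), aux_choquet ν hν0 F a b c hab hac hbc ha hb hc 1 8 9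
      (by norm_num) (by norm_num) (by norm_num) (by norm_num)] at h
  · linarith
  all_goals simp only [Function.update_apply, y]
  all_goals grind

/-- If the Choquet integral of a capacity ν (with ν(S)=1) on a finite set with
at least three elements is ambiguity prudent, then the third derivative of ν is nonnegative. -/
theorem CEU_ambiguityPrudent_implies_thirdDeriv_nonneg
    {Ω : Type*} [Fintype Ω] [DecidableEq Ω]
    (hcard : 3 ≤ Fintype.card Ω)
    (ν : Finset Ω → ℝ) (hν0 : ν ∅ = 0) (hν1 : ν Finset.univ = 1)
    (hmono : ∀ A B : Finset Ω, A ⊆ B → ν A ≤ ν B)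
    (hAP : AmbiguityPrudentC (choquet ν)) :
    ∀ (A : Finset Ω) (ω₁ ω₂ ω₃ : Ω), ω₁ ≠ ω₂ → ω₁ ≠ ω₃ → ω₂ ≠ ω₃ →
      0 ≤ thirdDeriv ν ω₁ ω₂ ω₃ A := by
  intro A ω₁ ω₂ ω₃ h12 h13 h23
  have e : thirdDeriv ν ω₁ ω₂ ω₃ A = ν ((A \ {ω₁, ω₂, ω₃}) ∪ {ω₁, ω₂, ω₃})
      - ν ((A \ {ω₁, ω₂, ω₃}) ∪ {ω₂, ω₃}) - ν ((A \ {ω₁, ω₂, ω₃}) ∪ {ω₃, ω₁})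
      - ν ((A \ {ω₁, ω₂, ω₃}) ∪ {ω₁, ω₂}) + ν ((A \ {ω₁, ω₂, ω₃}) ∪ {ω₁})
      + ν ((A \ {ω₁, ω₂, ω₃}) ∪ {ω₂}) + ν ((A \ {ω₁, ω₂, ω₃}) ∪ {ω₃})
      - ν (A \ {ω₁, ω₂, ω₃}) := by
    unfold thirdDeriv
    generalize A \ {ω₁, ω₂, ω₃} = F
    rw [Finset.sum_powerset_insert (by simp [h12, h13]), Finset.sum_powerset_insert (by simp [h23]),
      Finset.sum_powerset_insert (by simp [h23])]
    have p3 : ({ω₃} : Finset Ω).powerset = {∅, {ω₃}} := by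
      ext s; simp [Finset.subset_singleton_iff]
    rw [p3]
    have hne : (∅ : Finset Ω) ≠ {ω₃} := (Finset.singleton_ne_empty _).symm
    simp only [Finset.sum_pair hne, insert_empty_eq, Finset.card_empty, Finset.card_singleton,
      Finset.card_pair h12, Finset.card_pair h13, Finset.card_pair h23,
      Finset.card_eq_three.2 ⟨ω₁, ω₂, ω₃, h12, h13, h23, rfl⟩, Finset.union_empty,
      Finset.pair_comm ω₃ ω₁]
    norm_num
    ring
  rw [e]
  have n1 : ω₁ ∉ A \ {ω₁, ω₂, ω₃} := by simp
  have n2 : ω₂ ∉ A \ {ω₁, ω₂, ω₃} := by simp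
  have n3 : ω₃ ∉ A \ {ω₁, ω₂, ω₃} := by simp
  generalize A \ {ω₁, ω₂, ω₃} = F at *
  have c1 := aux_chain ν hν0 hAP F ω₁ ω₂ ω₃ h12 h13 h23 n1 n2 n3
  have c2 := aux_chain ν hν0 hAP F ω₂ ω₃ ω₁ h23 h12.symm h13.symm n2 n3 n1
  have c3 := aux_chain ν hν0 hAP F ω₃ ω₁ ω₂ h13.symm h23.symm h12 n3 n1 n2
  have e2 : ({ω₂, ω₃, ω₁} : Finset Ω) = {ω₁, ω₂, ω₃} := by ext; simp; tauto
  have e3 : ({ω₃, ω₁, ω₂} : Finset Ω) = {ω₁, ω₂, ω₃} := by ext; simp; tauto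
  rw [e2] at c2
  rw [e3] at c3
  linarith
end

section
/- Let S be a finite set with k ≥ 3 elements, let a ∈ [0,1] and b ∈ [−a,a], and let ν be the neo-additive capacity on S defined by ν(∅) = 0, ν(S) = 1, and ν(E) = (a − b)/2 + (1 − a)|E|/k for every E with ∅ ⊊ E ⊊ S. Then the Choquet integral V with respect to ν is ambiguity averse if and only if a = b; equivalently, Δ_{ω₁,ω₂}ν(A) ≥ 0 for every A ⊆ S and all distinct ω₁, ω₂ ∈ S if and only if a = b. -/
open MeasureTheory

lemma choq_integrable {Ω : Type*} [Fintype Ω] [DecidableEq Ω] (ν : Finset Ω → ℝ) (h0 : ν ∅ = 0)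
    (y : Ω → ℝ) :
    IntegrableOn (fun t : ℝ => ν (Finset.univ.filter fun ω => t ≤ y ω)) (Set.Ioi 0) := by
  have hmeas : Measurable (fun t : ℝ => ν (Finset.univ.filter fun ω => t ≤ y ω)) := by
    have h : (fun t : ℝ => ν (Finset.univ.filter fun ω => t ≤ y ω)) =
        fun t : ℝ => ∑ C : Finset Ω,
          if (Finset.univ.filter fun ω => t ≤ y ω) = C then ν C else 0 := by
      funext t
      rw [Finset.sum_ite_eq]
      simp
    rw [h]
    refine Finset.measurable_sum _ fun C _ => ?_
    refine Measurable.ite ?_ measurable_const measurable_const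
    have h2 : {t : ℝ | (Finset.univ.filter fun ω => t ≤ y ω) = C} =
        ⋂ ω, {t : ℝ | t ≤ y ω ↔ ω ∈ C} := by
      ext t
      simp [Finset.ext_iff]
    rw [h2]
    refine MeasurableSet.iInter fun ω => ?_
    by_cases hω : ω ∈ C
    · simp only [hω, iff_true]
      exact measurableSet_Iic
    · simp only [hω, iff_false, not_le]
      exact measurableSet_Ioi
  obtain ⟨M, hM⟩ : ∃ M, ∀ ω, y ω ≤ M := by
    refine ⟨∑ ω, |y ω|, fun ω => (le_abs_self _).trans ?_⟩
    exact Finset.single_le_sum (f := fun ω => |y ω|) (fun i _ => abs_nonneg _) (Finset.mem_univ ω)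
  have hI : IntegrableOn (fun t : ℝ => ν (Finset.univ.filter fun ω => t ≤ y ω)) (Set.Ioc 0 M) := by
    refine Measure.integrableOn_of_bounded (M := ∑ C, |ν C|) (by simp) hmeas.aestronglyMeasurable ?_
    refine Filter.Eventually.of_forall fun t => ?_
    exact Finset.single_le_sum (f := fun C => |ν C|) (fun i _ => abs_nonneg _) (Finset.mem_univ _)
  refine hI.of_forall_sdiff_eq_zero measurableSet_Ioi ?_
  rintro t ⟨ht0, ht⟩
  have : (Finset.univ.filter fun ω => t ≤ y ω) = ∅ := by
    ext ω
    simp only [Finset.mem_filter, Finset.mem_univ, true_and, Finset.notMem_empty, iff_false, not_le]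
    simp only [Set.mem_Ioc, Set.mem_Ioi] at ht ht0
    by_contra! hc
    exact ht ⟨ht0, hc.trans (hM ω)⟩
  simp only [this, h0]

lemma choq_diff {Ω : Type*} [Fintype Ω] [DecidableEq Ω] (ν : Finset Ω → ℝ) (h0 : ν ∅ = 0)
    (E R : Finset Ω) (ω₁ ω₂ : Ω) (u₁ u₂ ub : ℝ) (y : Ω → ℝ)
    (h1 : ω₁ ∉ E) (h2 : ω₂ ∉ E) (h12 : ω₁ ≠ ω₂)
    (hub : 0 < ub) (hu : 2 * ub < u₂ - u₁) (hu1 : 0 ≤ u₁ - ub)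
    (hE : ∀ ω ∈ E, y ω < u₁ - ub)
    (hR : ∀ ω, ω ∉ E → ω ≠ ω₁ → ω ≠ ω₂ → u₂ + ub < y ω)
    (hRdef : ∀ ω, ω ∈ R ↔ ω ∉ E ∧ ω ≠ ω₁ ∧ ω ≠ ω₂) :
    choquet ν (Function.update (Function.update y ω₁ (u₁ + ub)) ω₂ (u₂ - ub)) -
      choquet ν (Function.update (Function.update y ω₁ (u₁ - ub)) ω₂ (u₂ + ub)) =
    2 * ub * (ν (insert ω₁ (insert ω₂ R)) - 2 * ν (insert ω₂ R) + ν R) := by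
  unfold choquet
  rw [← integral_sub (choq_integrable ν h0 _) (choq_integrable ν h0 _)]
  have hval : ∀ (v₁ v₂ : ℝ) (t : ℝ) (ω : Ω),
      (t ≤ Function.update (Function.update y ω₁ v₁) ω₂ v₂ ω) ↔
      ((ω = ω₂ ∧ t ≤ v₂) ∨ (ω = ω₁ ∧ t ≤ v₁) ∨ (ω ≠ ω₁ ∧ ω ≠ ω₂ ∧ t ≤ y ω)) := by
    intro v₁ v₂ t ω
    by_cases e2 : ω = ω₂
    · subst e2; simp [h12.symm]
    · by_cases e1 : ω = ω₁
      · subst e1; simp [h12]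
      · simp [e1, e2]
  set p := ν (insert ω₁ (insert ω₂ R)) - ν (insert ω₂ R) with hp
  set q := ν R - ν (insert ω₂ R) with hq
  have key : Set.EqOn (fun t : ℝ =>
      ν (Finset.univ.filter fun ω =>
        t ≤ Function.update (Function.update y ω₁ (u₁ + ub)) ω₂ (u₂ - ub) ω) -
      ν (Finset.univ.filter fun ω =>
        t ≤ Function.update (Function.update y ω₁ (u₁ - ub)) ω₂ (u₂ + ub) ω))
      (fun t => (Set.Ioc (u₁ - ub) (u₁ + ub)).indicator (fun _ => p) t +
        (Set.Ioc (u₂ - ub) (u₂ + ub)).indicator (fun _ => q) t) (Set.Ioi 0) := by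
    intro t _
    simp only [hval]
    by_cases c1 : t ≤ u₁ - ub
    · rw [Set.indicator_of_notMem (by simp; intros; linarith),
        Set.indicator_of_notMem (by simp; intros; linarith), add_zero, sub_eq_zero]
      congr 1
      ext ω
      have e1 : t ≤ u₂ - ub := by linarith
      have e2 : t ≤ u₂ + ub := by linarith
      have e3 : t ≤ u₁ + ub := by linarith
      simp [c1, e1, e2, e3]
    have hy : ∀ ω, t ≤ u₂ + ub → ω ≠ ω₁ → ω ≠ ω₂ → (t ≤ y ω ↔ ω ∈ R) := by
      intro ω ht n1 n2
      rw [hRdef]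
      constructor
      · intro h
        exact ⟨fun hh => c1 (h.trans (hE ω hh).le), n1, n2⟩
      · intro h
        exact ht.trans (hR ω h.1 n1 n2).le
    have hR1 : ω₁ ∉ R := by simp [hRdef]
    have hR2 : ω₂ ∉ R := by simp [hRdef]
    by_cases c2 : t ≤ u₁ + ub
    · rw [Set.indicator_of_mem (by constructor <;> linarith),
        Set.indicator_of_notMem (by simp; intros; linarith), add_zero, hp]
      have e1 : t ≤ u₂ - ub := by linarith
      have e2 : t ≤ u₂ + ub := by linarith
      congr 2
      · ext ω
        have := hy ω e2
        simp only [Finset.mem_filter, Finset.mem_univ, true_and, Finset.mem_insert]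
        grind
      · ext ω
        have := hy ω e2
        simp only [Finset.mem_filter, Finset.mem_univ, true_and, Finset.mem_insert]
        grind
    by_cases c3 : t ≤ u₂ - ub
    · rw [Set.indicator_of_notMem (by simp; intros; linarith),
        Set.indicator_of_notMem (by simp; intros; linarith), add_zero, sub_eq_zero]
      have e2 : t ≤ u₂ + ub := by linarith
      congr 1
      ext ω
      simp [c1, c2, c3, e2]
    by_cases c4 : t ≤ u₂ + ub
    · rw [Set.indicator_of_notMem (by simp; intros; linarith),
        Set.indicator_of_mem (by constructor <;> linarith), zero_add, hq]
      congr 2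
      · ext ω
        have := hy ω c4
        simp only [Finset.mem_filter, Finset.mem_univ, true_and]
        grind
      · ext ω
        have := hy ω c4
        simp only [Finset.mem_filter, Finset.mem_univ, true_and, Finset.mem_insert]
        grind
    · rw [Set.indicator_of_notMem (by simp; intros; linarith),
        Set.indicator_of_notMem (by simp; intros; linarith), add_zero, sub_eq_zero]
      congr 1
      ext ω
      simp [c1, c2, c3, c4]
  have hint : ∀ (l r c : ℝ), Integrable ((Set.Ioc l r).indicator (fun _ : ℝ => c))
      (volume.restrict (Set.Ioi 0)) := by
    intro l r c
    apply Integrable.integrableOn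
    rw [integrable_indicator_iff measurableSet_Ioc]
    exact integrableOn_const (by simp)
  have hcalc : ∀ (l r c : ℝ), 0 ≤ l → l ≤ r →
      ∫ t in Set.Ioi (0:ℝ), (Set.Ioc l r).indicator (fun _ : ℝ => c) t = (r - l) * c := by
    intro l r c hl hr
    rw [setIntegral_indicator measurableSet_Ioc,
      Set.inter_eq_right.mpr (show Set.Ioc l r ⊆ Set.Ioi 0 from
        fun x hx => lt_of_le_of_lt hl hx.1)]
    simp [hr]
  rw [setIntegral_congr_fun measurableSet_Ioi key, integral_add (hint _ _ _) (hint _ _ _),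
    hcalc _ _ _ hu1 (by linarith), hcalc _ _ _ (by linarith) (by linarith)]
  rw [hp, hq]
  ring

lemma neo_nonneg {Ω : Type*} [Fintype Ω] [DecidableEq Ω]
    (a : ℝ) (ha : 0 ≤ a)
    (ν : Finset Ω → ℝ)
    (hν0 : ν ∅ = 0) (hν1 : ν Finset.univ = 1)
    (hν : ∀ E : Finset Ω, E ≠ ∅ → E ≠ Finset.univ →
      ν E = (a - a) / 2 + (1 - a) * E.card / (Fintype.card Ω : ℝ))
    (R : Finset Ω) (ω₁ ω₂ : Ω) (h12 : ω₁ ≠ ω₂) (h1 : ω₁ ∉ R) (h2 : ω₂ ∉ R) :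
    0 ≤ ν (insert ω₁ (insert ω₂ R)) - ν (insert ω₁ R) - ν (insert ω₂ R) + ν R ∧
    ν (insert ω₁ R) = ν (insert ω₂ R) := by
  have hk : (Fintype.card Ω : ℝ) ≠ 0 := by
    have : 0 < Fintype.card Ω := Fintype.card_pos_iff.mpr ⟨ω₁⟩
    positivity
  have hne : ∀ E : Finset Ω, E ≠ Finset.univ → ν E = (1 - a) * E.card / (Fintype.card Ω : ℝ) := by
    intro E hE
    by_cases h : E = ∅
    · simp [h, hν0]
    · rw [hν E h hE]; ring
  have n1 : insert ω₁ R ≠ Finset.univ := by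
    intro h
    have := Finset.mem_univ ω₂
    rw [← h] at this
    grind
  have n2 : insert ω₂ R ≠ Finset.univ := by
    intro h
    have := Finset.mem_univ ω₁
    rw [← h] at this
    grind
  have n0 : R ≠ Finset.univ := by
    rintro rfl
    simp at h1
  have h3 : ω₁ ∉ insert ω₂ R := by grind
  have hc : ((insert ω₁ (insert ω₂ R)).card : ℝ) = R.card + 2 := by
    rw [Finset.card_insert_of_notMem h3, Finset.card_insert_of_notMem h2]
    push_cast; ring
  rw [hne _ n1, hne _ n2, hne _ n0, Finset.card_insert_of_notMem h1,
    Finset.card_insert_of_notMem h2]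
  refine ⟨?_, rfl⟩
  by_cases hu : insert ω₁ (insert ω₂ R) = Finset.univ
  · have hc2 := hc
    rw [hu, Finset.card_univ] at hc2
    rw [hu, hν1]
    have : (R.card : ℝ) = Fintype.card Ω - 2 := by linarith
    push_cast
    rw [this]
    field_simp
    ring_nf
    positivity
  · rw [hne _ hu, hc]
    push_cast
    apply le_of_eq
    ring

lemma neo_empty {Ω : Type*} [Fintype Ω] [DecidableEq Ω]
    (hcard : 3 ≤ Fintype.card Ω) (a b : ℝ) (ν : Finset Ω → ℝ)
    (hν : ∀ E : Finset Ω, E ≠ ∅ → E ≠ Finset.univ →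
      ν E = (a - b) / 2 + (1 - a) * E.card / (Fintype.card Ω : ℝ))
    (ω₁ ω₂ : Ω) (h12 : ω₁ ≠ ω₂) :
    ν {ω₁} = (a - b) / 2 + (1 - a) / (Fintype.card Ω : ℝ) ∧
    ν {ω₂} = (a - b) / 2 + (1 - a) / (Fintype.card Ω : ℝ) ∧
    ν {ω₁, ω₂} = (a - b) / 2 + 2 * ((1 - a) / (Fintype.card Ω : ℝ)) := by
  have hlt : ∀ E : Finset Ω, E.card < 3 → E ≠ Finset.univ := by
    rintro E h rfl
    rw [Finset.card_univ] at h
    omega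
  have hc : ({ω₁, ω₂} : Finset Ω).card = 2 := Finset.card_pair h12
  refine ⟨?_, ?_, ?_⟩
  · rw [hν _ (by simp) (hlt _ (by simp))]; simp
  · rw [hν _ (by simp) (hlt _ (by simp))]; simp
  · rw [hν _ (by simp) (hlt _ (by omega)), hc]; push_cast; ring

/-- For the neo-additive capacity ν with parameters a ∈ [0,1], b ∈ [−a,a] on a
finite set with k ≥ 3 elements, the Choquet integral is ambiguity averse iff a = b;
equivalently, the second derivative of ν is nonnegative iff a = b. -/
theorem NCEU_ambiguityAverse_iff_a_eq_b
    {Ω : Type*} [Fintype Ω] [DecidableEq Ω]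
    (hcard : 3 ≤ Fintype.card Ω)
    (a b : ℝ) (ha : a ∈ Set.Icc (0 : ℝ) 1) (hb : b ∈ Set.Icc (-a) a)
    (ν : Finset Ω → ℝ)
    (hν0 : ν ∅ = 0) (hν1 : ν Finset.univ = 1)
    (hν : ∀ E : Finset Ω, E ≠ ∅ → E ≠ Finset.univ →
      ν E = (a - b) / 2 + (1 - a) * E.card / (Fintype.card Ω : ℝ)) :
    (AmbiguityAverseC (choquet ν) ↔ a = b) ∧
    ((∀ (A : Finset Ω) (ω₁ ω₂ : Ω), ω₁ ≠ ω₂ → 0 ≤ secondDeriv ν ω₁ ω₂ A) ↔ a = b) := by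
  obtain ⟨ω₁, ω₂, h12⟩ : ∃ x y : Ω, x ≠ y :=
    Fintype.one_lt_card_iff.mp (by omega)
  obtain ⟨v1, v2, v3⟩ := neo_empty hcard a b ν hν ω₁ ω₂ h12
  refine ⟨⟨fun h => ?_, ?_⟩, ⟨fun h => ?_, ?_⟩⟩
  · have hE : ∀ ω, ω ∈ (Finset.univ \ {ω₁, ω₂} : Finset Ω) ↔ ω ≠ ω₁ ∧ ω ≠ ω₂ := by
      intro ω; simp
    have hy0 : ∀ ω, ω ≠ ω₁ → ω ≠ ω₂ →
        Function.update (Function.update (fun _ : Ω => (0:ℝ)) ω₁ 2) ω₂ 5 ω = 0 := by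
      intro ω n1 n2; simp [n1, n2]
    have hlow : ∀ ω ∈ (Finset.univ \ {ω₁, ω₂} : Finset Ω),
        Function.update (Function.update (fun _ : Ω => (0:ℝ)) ω₁ 2) ω₂ 5 ω < 2 - 1 := by
      intro ω hω
      rw [hE] at hω
      rw [hy0 ω hω.1 hω.2]; norm_num
    have hhigh : ∀ ω, ω ∉ (Finset.univ \ {ω₁, ω₂} : Finset Ω) → ω ≠ ω₁ → ω ≠ ω₂ →
        (5:ℝ) + 1 < Function.update (Function.update (fun _ : Ω => (0:ℝ)) ω₁ 2) ω₂ 5 ω := by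
      intro ω hω n1 n2
      exact absurd ((hE ω).2 ⟨n1, n2⟩) hω
    have hA := h (Finset.univ \ {ω₁, ω₂}) ω₁ ω₂ 2 5 1
      (Function.update (Function.update (fun _ : Ω => (0:ℝ)) ω₁ 2) ω₂ 5)
      (by simp) (by simp) h12 (by norm_num) (by norm_num) (by norm_num) (by norm_num)
      (by
        intro ω
        by_cases e2 : ω = ω₂
        · subst e2; simp
        · by_cases e1 : ω = ω₁
          · subst e1; simp [h12]
          · rw [hy0 ω e1 e2])
      (by simp [h12]) (by simp) hlow hhigh
    have hD := choq_diff ν hν0 (Finset.univ \ {ω₁, ω₂}) ∅ ω₁ ω₂ 2 5 1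
      (Function.update (Function.update (fun _ : Ω => (0:ℝ)) ω₁ 2) ω₂ 5)
      (by simp) (by simp) h12 (by norm_num) (by norm_num) (by norm_num) hlow hhigh
      (by intro ω; rw [hE]; simp)
    rw [insert_empty_eq, v2, v3, hν0] at hD
    have hA' := sub_nonneg.mpr hA
    rw [hD] at hA'
    linarith [hb.2]
  · rintro rfl
    intro E ω₁ ω₂ u₁ u₂ ub y h1 h2 h12 hu hub h2u hu1 hy hy1 hy2 hlow hhigh
    have hD := choq_diff ν hν0 E (Finset.univ.filter fun ω => ω ∉ E ∧ ω ≠ ω₁ ∧ ω ≠ ω₂)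
      ω₁ ω₂ u₁ u₂ ub y h1 h2 h12 hub h2u hu1 hlow hhigh (by intro ω; simp)
    obtain ⟨k1, k2⟩ := neo_nonneg a ha.1 ν hν0 hν1 hν
      (Finset.univ.filter fun ω => ω ∉ E ∧ ω ≠ ω₁ ∧ ω ≠ ω₂) ω₁ ω₂ h12 (by simp) (by simp)
    rw [k2] at k1
    have := mul_nonneg (by linarith : 0 ≤ 2 * ub) k1
    linarith
  · have hA := h ∅ ω₁ ω₂ h12
    have e1 : ((∅ ∪ {ω₁}) \ {ω₂} : Finset Ω) = {ω₁} := by ext; simp; grind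
    have e2 : ((∅ ∪ {ω₂}) \ {ω₁} : Finset Ω) = {ω₂} := by ext; simp; grind
    rw [secondDeriv, e1, e2, Finset.empty_union, Finset.empty_sdiff, v1, v2, v3, hν0] at hA
    linarith [hb.2]
  · rintro rfl
    intro A ω₁ ω₂ h12
    have k := (neo_nonneg a ha.1 ν hν0 hν1 hν (A \ {ω₁, ω₂}) ω₁ ω₂ h12 (by simp) (by simp)).1
    have e0 : A ∪ {ω₁, ω₂} = insert ω₁ (insert ω₂ (A \ {ω₁, ω₂})) := by ext; simp; grind
    have e1 : (A ∪ {ω₁}) \ {ω₂} = insert ω₁ (A \ {ω₁, ω₂}) := by ext; simp; grind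
    have e2 : (A ∪ {ω₂}) \ {ω₁} = insert ω₂ (A \ {ω₁, ω₂}) := by ext; simp; grind
    rw [secondDeriv, e0, e1, e2]
    exact k
end

section
/- Let S be a finite set with k ≥ 3 elements, let a ∈ [0,1] and b ∈ [−a,a], and let ν be the neo-additive capacity on S defined by ν(∅) = 0, ν(S) = 1, and ν(E) = (a − b)/2 + (1 − a)|E|/k for every E with ∅ ⊊ E ⊊ S. Then Δ_{ω₁,ω₂,ω₃}ν(A) ≥ 0 for every A ⊆ S and all distinct ω₁, ω₂, ω₃ ∈ S; consequently, the Choquet integral V with respect to ν is ambiguity prudent. -/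
open MeasureTheory

theorem aux_integral_s7 (m : ℝ) (hm : 0 ≤ m) :
    IntegrableOn ((Set.Iic m).indicator (fun _ => (1 : ℝ))) (Set.Ioi 0) ∧
    ∫ t in Set.Ioi (0 : ℝ), (Set.Iic m).indicator (fun _ => (1 : ℝ)) t = m := by
  constructor
  · rw [IntegrableOn, integrable_indicator_iff measurableSet_Iic, IntegrableOn,
      Measure.restrict_restrict measurableSet_Iic]
    have : Set.Iic m ∩ Set.Ioi 0 = Set.Ioc 0 m := by ext; simp [and_comm]
    rw [this]
    simp
  · rw [setIntegral_indicator measurableSet_Iic, Set.Ioi_inter_Iic]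
    simp [hm]

theorem aux_repr {Ω : Type*} [Fintype Ω] [DecidableEq Ω] [Nonempty Ω]
    (a b : ℝ) (ν : Finset Ω → ℝ)
    (hν0 : ν ∅ = 0) (hν1 : ν Finset.univ = 1)
    (hν : ∀ E : Finset Ω, E ≠ ∅ → E ≠ Finset.univ →
      ν E = (a - b) / 2 + (1 - a) * E.card / (Fintype.card Ω : ℝ)) (E : Finset Ω) :
    ν E = (a - b) / 2 * (1 - if E = ∅ then 1 else 0)
      + (1 - a) / (Fintype.card Ω : ℝ) * E.card
      + (a + b) / 2 * (if E = Finset.univ then 1 else 0) := by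
  by_cases h0 : E = ∅
  · subst h0
    have : (∅ : Finset Ω) ≠ Finset.univ := (Finset.univ_nonempty (α := Ω)).ne_empty.symm
    simp [hν0, this]
  by_cases h1 : E = Finset.univ
  · subst h1
    have hk : (Fintype.card Ω : ℝ) ≠ 0 := by simp
    simp only [hν1, h0, if_true, if_false, Finset.card_univ]
    field_simp
    ring
  · rw [hν E h0 h1]
    simp only [h0, h1, if_false]
    ring

theorem aux_choquet_s7 {Ω : Type*} [Fintype Ω] [DecidableEq Ω] [Nonempty Ω]
    (c d e : ℝ) (ν : Finset Ω → ℝ)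
    (hν : ∀ E : Finset Ω, ν E = c * (1 - if E = ∅ then 1 else 0)
      + d * E.card + e * (if E = Finset.univ then 1 else 0))
    (y : Ω → ℝ) (hy : ∀ ω, 0 ≤ y ω) :
    choquet ν y = c * Finset.univ.sup' Finset.univ_nonempty y + d * ∑ ω, y ω
      + e * Finset.univ.inf' Finset.univ_nonempty y := by
  set M := Finset.univ.sup' Finset.univ_nonempty y with hM
  set m := Finset.univ.inf' Finset.univ_nonempty y with hm
  have hM0 : 0 ≤ M := by
    obtain ⟨w⟩ := ‹Nonempty Ω›
    exact (hy w).trans (Finset.le_sup' y (Finset.mem_univ w))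
  have hm0 : 0 ≤ m := by
    rw [hm, Finset.le_inf'_iff]
    exact fun ω _ => hy ω
  have key : ∀ t : ℝ, ν (Finset.univ.filter fun ω => t ≤ y ω) =
      c * (Set.Iic M).indicator (fun _ => (1 : ℝ)) t
      + d * ∑ ω, (Set.Iic (y ω)).indicator (fun _ => (1 : ℝ)) t
      + e * (Set.Iic m).indicator (fun _ => (1 : ℝ)) t := by
    intro t
    rw [hν]
    congr 1
    · congr 1
      · congr 1
        by_cases h : t ≤ M
        · have h' := h
          rw [hM, Finset.le_sup'_iff] at h'
          obtain ⟨w, -, hw⟩ := h'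
          have : (Finset.univ.filter fun ω => t ≤ y ω) ≠ ∅ := by
            apply Finset.Nonempty.ne_empty
            exact ⟨w, by simpa using hw⟩
          rw [if_neg this]
          simp [Set.indicator, h]
        · have : (Finset.univ.filter fun ω => t ≤ y ω) = ∅ := by
            rw [Finset.filter_eq_empty_iff]
            intro w _ hw
            exact h (hw.trans (Finset.le_sup' y (Finset.mem_univ w)))
          rw [this]
          simp [Set.indicator, h]
      · simp [Set.indicator]
    · congr 1
      have : (Finset.univ.filter fun ω => t ≤ y ω) = Finset.univ ↔ t ≤ m := by
        rw [hm, Finset.le_inf'_iff, Finset.filter_eq_self]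
      simp only [this, Set.indicator, Set.mem_Iic]
  unfold choquet
  simp_rw [key]
  have i1 := (aux_integral_s7 M hM0).1.const_mul c
  have i3 := (aux_integral_s7 m hm0).1.const_mul e
  have i2' : ∀ ω ∈ (Finset.univ : Finset Ω), Integrable
      ((Set.Iic (y ω)).indicator (fun _ => (1 : ℝ))) (volume.restrict (Set.Ioi 0)) :=
    fun ω _ => (aux_integral_s7 (y ω) (hy ω)).1
  have i2 := (integrable_finsetSum _ i2').const_mul d
  have i12 := i1.add i2
  simp only [Pi.add_def] at i12
  rw [integral_add i12 i3, integral_add i1 i2, integral_const_mul, integral_const_mul,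
    integral_const_mul, integral_finsetSum _ i2', (aux_integral_s7 M hM0).2, (aux_integral_s7 m hm0).2]
  simp_rw [fun ω => (aux_integral_s7 (y ω) (hy ω)).2]

theorem aux_third {Ω : Type*} [Fintype Ω] [DecidableEq Ω]
    (c d e : ℝ) (hc : 0 ≤ c) (he : 0 ≤ e) (ν : Finset Ω → ℝ)
    (hν : ∀ E : Finset Ω, ν E = c * (1 - if E = ∅ then 1 else 0)
      + d * E.card + e * (if E = Finset.univ then 1 else 0))
    (A : Finset Ω) (x y z : Ω) (hxy : x ≠ y) (hxz : x ≠ z) (hyz : y ≠ z) :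
    0 ≤ thirdDeriv ν x y z A := by
  unfold thirdDeriv
  set B := A \ {x, y, z} with hB
  have hx : x ∉ B := by simp [hB]
  have hy : y ∉ B := by simp [hB]
  have hz : z ∉ B := by simp [hB]
  have hsum : ∀ C ∈ ({x, y, z} : Finset Ω).powerset,
      (-1 : ℝ) ^ (3 - C.card) * ν (B ∪ C) =
      (-1 : ℝ) ^ (3 - C.card) * (c * (1 - if C = ∅ then (if B = ∅ then 1 else 0) else 0)
        + d * (B.card + C.card)
        + e * (if C = {x, y, z} then (if B ∪ {x, y, z} = Finset.univ then 1 else 0) else 0)) := by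
    intro C hC
    rw [Finset.mem_powerset] at hC
    have hdis : Disjoint B C := by
      apply Finset.disjoint_of_subset_right hC
      rw [hB]; exact Finset.sdiff_disjoint
    rw [hν, Finset.card_union_of_disjoint hdis]
    have h1 : (if B ∪ C = ∅ then (1 : ℝ) else 0)
        = if C = ∅ then (if B = ∅ then 1 else 0) else 0 := by
      by_cases h : C = ∅ <;> simp [h, Finset.union_eq_empty]
    have h2 : (if B ∪ C = Finset.univ then (1 : ℝ) else 0)
        = if C = {x, y, z} then (if B ∪ {x, y, z} = Finset.univ then 1 else 0) else 0 := by
      by_cases h : C = {x, y, z}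
      · simp [h]
      · have : B ∪ C ≠ Finset.univ := by
          intro hu
          apply h
          apply Finset.Subset.antisymm hC
          intro w hw
          have hwu : w ∈ B ∪ C := hu ▸ Finset.mem_univ w
          rw [Finset.mem_union] at hwu
          rcases hwu with hwB | hwC
          · rw [hB, Finset.mem_sdiff] at hwB
            exact absurd hw hwB.2
          · exact hwC
        simp [h, this]
    rw [h1, h2]
    push_cast
    ring
  rw [Finset.sum_congr rfl hsum]
  generalize hp : (if B = ∅ then (1 : ℝ) else 0) = p
  generalize hq : (if B ∪ {x, y, z} = Finset.univ then (1 : ℝ) else 0) = q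
  have hp0 : 0 ≤ p := by rw [← hp]; split_ifs <;> norm_num
  have hq0 : 0 ≤ q := by rw [← hq]; split_ifs <;> norm_num
  have hF : ∀ C : Finset Ω, C ⊆ {x, y, z} → (C = {x, y, z} ↔ C.card = 3) := by
    intro C hC
    have h3 : ({x, y, z} : Finset Ω).card = 3 := Finset.card_eq_three.2 ⟨x, y, z, hxy, hxz, hyz, rfl⟩
    constructor
    · rintro rfl; exact h3
    · intro h; exact Finset.eq_of_subset_of_card_le hC (by omega)
  have hG : ∀ C ∈ ({x, y, z} : Finset Ω).powerset,
      (-1 : ℝ) ^ (3 - C.card) * (c * (1 - if C = ∅ then p else 0)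
        + d * (B.card + C.card) + e * (if C = {x, y, z} then q else 0)) =
      (fun n : ℕ => (-1 : ℝ) ^ (3 - n) * (c * (1 - if n = 0 then p else 0)
        + d * (B.card + n) + e * (if n = 3 then q else 0))) C.card := by
    intro C hC
    simp only [hF C (Finset.mem_powerset.1 hC), Finset.card_eq_zero]
  rw [Finset.sum_congr rfl hG, Finset.sum_powerset_apply_card (fun n : ℕ => (-1 : ℝ) ^ (3 - n) *
      (c * (1 - if n = 0 then p else 0) + d * (B.card + n) + e * (if n = 3 then q else 0))),
    Finset.card_eq_three.2 ⟨x, y, z, hxy, hxz, hyz, rfl⟩]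
  simp [Finset.sum_range_succ, Nat.choose]
  nlinarith [mul_nonneg hc hp0, mul_nonneg he hq0]

/-- For the neo-additive capacity ν with parameters a ∈ [0,1], b ∈ [−a,a] on a
finite set with k ≥ 3 elements, the third derivative of ν is nonnegative; consequently
the Choquet integral is ambiguity prudent. -/
theorem NCEU_thirdDeriv_nonneg_and_ambiguityPrudent
    {Ω : Type*} [Fintype Ω] [DecidableEq Ω]
    (hcard : 3 ≤ Fintype.card Ω)
    (a b : ℝ) (ha : a ∈ Set.Icc (0 : ℝ) 1) (hb : b ∈ Set.Icc (-a) a)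
    (ν : Finset Ω → ℝ)
    (hν0 : ν ∅ = 0) (hν1 : ν Finset.univ = 1)
    (hν : ∀ E : Finset Ω, E ≠ ∅ → E ≠ Finset.univ →
      ν E = (a - b) / 2 + (1 - a) * E.card / (Fintype.card Ω : ℝ)) :
    (∀ (A : Finset Ω) (ω₁ ω₂ ω₃ : Ω), ω₁ ≠ ω₂ → ω₁ ≠ ω₃ → ω₂ ≠ ω₃ →
      0 ≤ thirdDeriv ν ω₁ ω₂ ω₃ A) ∧
    AmbiguityPrudentC (choquet ν) := by
  have : Nonempty Ω := Fintype.card_pos_iff.1 (by omega)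
  have hrep := aux_repr a b ν hν0 hν1 hν
  have hc : 0 ≤ (a - b) / 2 := by linarith [hb.2]
  have he : 0 ≤ (a + b) / 2 := by linarith [hb.1]
  refine ⟨fun A x y z hxy hxz hyz => aux_third _ _ _ hc he ν hrep A x y z hxy hxz hyz, ?_⟩
  intro E w₁ w₂ w₃ u₁ u₂ u₃ ub y _ _ _ h12 h13 h23 hu12 hu23 hu hub hub3 hu1 hy hy1 hy2 hy3 _ _
  set yB := Function.update (Function.update (Function.update y w₁ (u₁ + ub)) w₂ (u₂ - 2 * ub))
    w₃ (u₃ + ub) with hB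
  set yA := Function.update (Function.update (Function.update y w₁ (u₁ - ub)) w₂ (u₂ + 2 * ub))
    w₃ (u₃ - ub) with hA
  have B1 : yB w₁ = u₁ + ub := by simp [hB, h12, h13]
  have B2 : yB w₂ = u₂ - 2 * ub := by simp [hB, h23]
  have B3 : yB w₃ = u₃ + ub := by simp [hB]
  have A1 : yA w₁ = u₁ - ub := by simp [hA, h12, h13]
  have A2 : yA w₂ = u₂ + 2 * ub := by simp [hA, h23]
  have A3 : yA w₃ = u₃ - ub := by simp [hA]
  have B0 : ∀ w, w ≠ w₁ → w ≠ w₂ → w ≠ w₃ → yB w = y w := by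
    intro w g1 g2 g3; simp [hB, g1, g2, g3]
  have A0 : ∀ w, w ≠ w₁ → w ≠ w₂ → w ≠ w₃ → yA w = y w := by
    intro w g1 g2 g3; simp [hA, g1, g2, g3]
  have hcases : ∀ w, w = w₁ ∨ w = w₂ ∨ w = w₃ ∨ (w ≠ w₁ ∧ w ≠ w₂ ∧ w ≠ w₃) := by
    intro w; tauto
  have hyB : ∀ w, 0 ≤ yB w := by
    intro w
    rcases hcases w with rfl | rfl | rfl | ⟨g1, g2, g3⟩
    · rw [B1]; linarith
    · rw [B2]; linarith
    · rw [B3]; linarith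
    · rw [B0 w g1 g2 g3]; exact hy w
  have hyA : ∀ w, 0 ≤ yA w := by
    intro w
    rcases hcases w with rfl | rfl | rfl | ⟨g1, g2, g3⟩
    · rw [A1]; linarith
    · rw [A2]; linarith
    · rw [A3]; linarith
    · rw [A0 w g1 g2 g3]; exact hy w
  have hsum : ∑ w, yB w = ∑ w, yA w := by
    rw [← sub_eq_zero, ← Finset.sum_sub_distrib]
    have hs : ∑ w ∈ ({w₁, w₂, w₃} : Finset Ω), (yB w - yA w) = ∑ w, (yB w - yA w) := by
      apply Finset.sum_subset (Finset.subset_univ _)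
      intro w _ hw
      simp only [Finset.mem_insert, Finset.mem_singleton, not_or] at hw
      rw [B0 w hw.1 hw.2.1 hw.2.2, A0 w hw.1 hw.2.1 hw.2.2, sub_self]
    rw [← hs, Finset.sum_insert (by simp [h12, h13]), Finset.sum_insert (by simp [h23]),
      Finset.sum_singleton, A1, A2, A3, B1, B2, B3]
    ring
  have hsup : Finset.univ.sup' Finset.univ_nonempty yA
      ≤ Finset.univ.sup' Finset.univ_nonempty yB := by
    apply Finset.sup'_le
    intro w _
    have hle := fun v => Finset.le_sup' yB (Finset.mem_univ v)
    rcases hcases w with rfl | rfl | rfl | ⟨g1, g2, g3⟩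
    · linarith [hle w]
    · linarith [hle w₃]
    · linarith [hle w]
    · linarith [hle w, A0 w g1 g2 g3, B0 w g1 g2 g3]
  have hinf : Finset.univ.inf' Finset.univ_nonempty yA
      ≤ Finset.univ.inf' Finset.univ_nonempty yB := by
    apply Finset.le_inf'
    intro w _
    have hle := fun v => Finset.inf'_le yA (Finset.mem_univ v)
    rcases hcases w with rfl | rfl | rfl | ⟨g1, g2, g3⟩
    · linarith [hle w]
    · linarith [hle w₁]
    · linarith [hle w]
    · linarith [hle w, A0 w g1 g2 g3, B0 w g1 g2 g3]
  rw [aux_choquet_s7 _ _ _ ν hrep yB hyB, aux_choquet_s7 _ _ _ ν hrep yA hyA, hsum]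
  have := mul_le_mul_of_nonneg_left hsup hc
  have := mul_le_mul_of_nonneg_left hinf he
  linarith
end

section
/- Let k ≥ 2 and let c : Δ_k → [0,∞) be lower semicontinuous, convex and symmetric. Then for every y ∈ ℝ^k, every minimizer p* of p ↦ ⟨p, y⟩ + c(p) over Δ_k, and all indices i, j with y_i < y_j, one has p*_j ≤ p*_i. In particular, the VP functional U(y) = min_{p ∈ Δ_k}(⟨p, y⟩ + c(p)) is ambiguity averse. -/
/-- Ambiguity aversion for a functional on utility profiles over the states {1,…,k}. -/
def AmbiguityAverse {k : ℕ} (U : (Fin k → ℝ) → ℝ) : Prop :=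
  ∀ (E : Finset (Fin k)) (ω₁ ω₂ : Fin k) (u₁ u₂ ub : ℝ) (y : Fin k → ℝ),
    ω₁ ∉ E → ω₂ ∉ E → ω₁ ≠ ω₂ →
    u₁ < u₂ → 0 < ub → 2 * ub < u₂ - u₁ →
    y ω₁ = u₁ → y ω₂ = u₂ →
    (∀ ω ∈ E, y ω < u₁ - ub) →
    (∀ ω, ω ∉ E → ω ≠ ω₁ → ω ≠ ω₂ → u₂ + ub < y ω) →
    U (Function.update (Function.update y ω₁ (u₁ + ub)) ω₂ (u₂ - ub)) ≥
      U (Function.update (Function.update y ω₁ (u₁ - ub)) ω₂ (u₂ + ub))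

/-- Ambiguity prudence for a functional on utility profiles over the states {1,…,k}. -/
def AmbiguityPrudent {k : ℕ} (U : (Fin k → ℝ) → ℝ) : Prop :=
  ∀ (E : Finset (Fin k)) (ω₁ ω₂ ω₃ : Fin k) (u₁ u₂ u₃ ub : ℝ) (y : Fin k → ℝ),
    ω₁ ∉ E → ω₂ ∉ E → ω₃ ∉ E →
    ω₁ ≠ ω₂ → ω₁ ≠ ω₃ → ω₂ ≠ ω₃ →
    u₁ < u₂ → u₂ < u₃ → u₂ - u₁ = u₃ - u₂ →
    0 < ub → 3 * ub < u₂ - u₁ →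
    y ω₁ = u₁ → y ω₂ = u₂ → y ω₃ = u₃ →
    (∀ ω ∈ E, y ω < u₁ - ub) →
    (∀ ω, ω ∉ E → ω ≠ ω₁ → ω ≠ ω₂ → ω ≠ ω₃ → u₃ + ub < y ω) →
    U (Function.update (Function.update (Function.update y ω₁ (u₁ + ub)) ω₂ (u₂ - 2 * ub)) ω₃ (u₃ + ub)) ≥
      U (Function.update (Function.update (Function.update y ω₁ (u₁ - ub)) ω₂ (u₂ + 2 * ub)) ω₃ (u₃ - ub))

/-- For k ≥ 2 and a lower semicontinuous, convex, symmetric ambiguity index c,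
every minimizer p* of p ↦ ⟨p,y⟩ + c(p) over Δ_k satisfies p*_j ≤ p*_i whenever y_i < y_j;
in particular, the VP functional U is ambiguity averse. -/
theorem VP_minimizers_monotone_and_ambiguityAverse
    {k : ℕ} (hk : 2 ≤ k)
    (c : (Fin k → ℝ) → ℝ)
    (hc0 : ∀ p ∈ stdSimplex ℝ (Fin k), 0 ≤ c p)
    (hlsc : LowerSemicontinuousOn c (stdSimplex ℝ (Fin k)))
    (hconv : ConvexOn ℝ (stdSimplex ℝ (Fin k)) c)
    (hsymm : ∀ p ∈ stdSimplex ℝ (Fin k), ∀ σ : Equiv.Perm (Fin k), c (fun i => p (σ i)) = c p)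
    (U : (Fin k → ℝ) → ℝ)
    (hU : ∀ y : Fin k → ℝ,
      IsLeast {v : ℝ | ∃ p ∈ stdSimplex ℝ (Fin k), v = (∑ i, p i * y i) + c p} (U y)) :
    (∀ (y : Fin k → ℝ), ∀ p ∈ stdSimplex ℝ (Fin k),
      (∀ q ∈ stdSimplex ℝ (Fin k), (∑ l, p l * y l) + c p ≤ (∑ l, q l * y l) + c q) →
      ∀ i j : Fin k, y i < y j → p j ≤ p i) ∧
    AmbiguityAverse U := by
  have key : ∀ (y : Fin k → ℝ), ∀ p ∈ stdSimplex ℝ (Fin k),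
      (∀ q ∈ stdSimplex ℝ (Fin k), (∑ l, p l * y l) + c p ≤ (∑ l, q l * y l) + c q) →
      ∀ i j : Fin k, y i < y j → p j ≤ p i := by
    intro y p hp hmin i j hij
    have hne : i ≠ j := by
      rintro rfl
      exact lt_irrefl _ hij
    have hq : (fun l => p (Equiv.swap i j l)) ∈ stdSimplex ℝ (Fin k) := by
      refine ⟨fun l => hp.1 _, ?_⟩
      rw [Equiv.sum_comp (Equiv.swap i j) p]
      exact hp.2
    have h := hmin _ hq
    rw [hsymm p hp] at h
    have hd : (∑ l, p (Equiv.swap i j l) * y l) - ∑ l, p l * y l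
        = (p j - p i) * (y i - y j) := by
      rw [← Finset.sum_sub_distrib, Fintype.sum_eq_add i j hne]
      · simp only [Equiv.swap_apply_left, Equiv.swap_apply_right]
        ring
      · rintro x ⟨h1, h2⟩
        rw [Equiv.swap_apply_of_ne_of_ne h1 h2, sub_self]
    by_contra! hlt
    nlinarith [mul_pos (sub_pos.2 hlt) (sub_pos.2 hij)]
  refine ⟨key, ?_⟩
  intro E ω₁ ω₂ u₁ u₂ ub y _ _ hne _ hub h2 _ _ _ _
  set yB := Function.update (Function.update y ω₁ (u₁ + ub)) ω₂ (u₂ - ub) with hyB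
  set yA := Function.update (Function.update y ω₁ (u₁ - ub)) ω₂ (u₂ + ub) with hyA
  have hB1 : yB ω₁ = u₁ + ub := by simp [hyB, hne]
  have hB2 : yB ω₂ = u₂ - ub := by simp [hyB]
  have hA1 : yA ω₁ = u₁ - ub := by simp [hyA, hne]
  have hA2 : yA ω₂ = u₂ + ub := by simp [hyA]
  obtain ⟨⟨p, hp, hpU⟩, hlow⟩ := hU yB
  have hmono : p ω₂ ≤ p ω₁ := by
    refine key yB p hp (fun q hq => ?_) ω₁ ω₂ (by rw [hB1, hB2]; linarith)
    rw [← hpU]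
    exact hlow ⟨q, hq, rfl⟩
  have hAle : U yA ≤ (∑ i, p i * yA i) + c p := (hU yA).2 ⟨p, hp, rfl⟩
  have hd : (∑ l, p l * yB l) - ∑ l, p l * yA l = 2 * ub * (p ω₁ - p ω₂) := by
    rw [← Finset.sum_sub_distrib, Fintype.sum_eq_add ω₁ ω₂ hne]
    · rw [hA1, hA2, hB1, hB2]
      ring
    · rintro x ⟨h1, h2⟩
      simp [hyA, hyB, h1, h2]
  have := mul_nonneg hub.le (sub_nonneg.2 hmono)
  change U yA ≤ U yB
  linarith
end

section
/- Let f : ℝ → ℝ be three times differentiable. Then f'''(t) ≥ 0 for all t ∈ ℝ if and only if for all x, y, z ∈ ℝ with x ≤ y ≤ z and y = (x + z)/2, and for all δ with 0 ≤ δ ≤ (z − x)/2, one has f(x + δ) + f(y − 2δ) + f(z + δ) ≥ f(x − δ) + f(y + 2δ) + f(z − δ). -/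
lemma aux_neg_right (m : ℝ → ℝ) (c : ℝ) (hm : HasDerivAt m c 0) (h0 : m 0 = 0) (hc : c < 0) :
    ∃ ε > 0, ∀ a, 0 < a → a < ε → m a < 0 := by
  have h1 := (hasDerivAt_iff_tendsto_slope.1 hm).eventually (gt_mem_nhds hc)
  rw [eventually_nhdsWithin_iff, Metric.eventually_nhds_iff] at h1
  obtain ⟨ε, hε, h⟩ := h1
  refine ⟨ε, hε, fun a ha hae => ?_⟩
  have h2 := h (y := a) (by rw [Real.dist_eq, sub_zero, abs_of_pos ha]; exact hae) ha.ne'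
  rw [slope_def_field, h0, sub_zero, sub_zero] at h2
  by_contra h3
  exact absurd h2 (not_lt.2 (div_nonneg (not_lt.1 h3) ha.le))

lemma aux_plus (F : ℝ → ℝ) (hF : Differentiable ℝ F) (y s : ℝ) :
    HasDerivAt (fun s => F (y + s)) (deriv F (y + s)) s := by
  have := (hF (y + s)).hasDerivAt.comp_const_add y s
  exact this

lemma aux_minus (F : ℝ → ℝ) (hF : Differentiable ℝ F) (y s : ℝ) :
    HasDerivAt (fun s => F (y - s)) (-deriv F (y - s)) s := by
  have := (hF (y - s)).hasDerivAt.comp_const_sub y s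
  exact this

lemma aux_mono (k k' : ℝ → ℝ) (hk : ∀ s, HasDerivAt k (k' s) s) (h : ∀ s, 0 ≤ s → 0 ≤ k' s) :
    MonotoneOn k (Set.Ici 0) := by
  refine monotoneOn_of_deriv_nonneg (convex_Ici 0)
    (fun s _ => (hk s).continuousAt.continuousWithinAt)
    (fun s _ => (hk s).differentiableAt.differentiableWithinAt) ?_
  intro s hs
  rw [interior_Ici] at hs
  rw [(hk s).deriv]
  exact h s (le_of_lt hs)

/-- For a three times differentiable f : ℝ → ℝ, f''' ≥ 0 everywhere iff for
all x ≤ y ≤ z with y = (x+z)/2 and all 0 ≤ δ ≤ (z−x)/2 one has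
f(x+δ) + f(y−2δ) + f(z+δ) ≥ f(x−δ) + f(y+2δ) + f(z−δ). -/
theorem third_deriv_nonneg_iff_apportionment
    (f : ℝ → ℝ)
    (hd1 : Differentiable ℝ f)
    (hd2 : Differentiable ℝ (deriv f))
    (hd3 : Differentiable ℝ (deriv (deriv f))) :
    (∀ t : ℝ, 0 ≤ deriv (deriv (deriv f)) t) ↔
    (∀ x y z δ : ℝ, x ≤ y → y ≤ z → y = (x + z) / 2 → 0 ≤ δ → δ ≤ (z - x) / 2 →
      f (x - δ) + f (y + 2 * δ) + f (z - δ) ≤ f (x + δ) + f (y - 2 * δ) + f (z + δ)) := by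
  constructor
  · intro h x y z δ hxy hyz hy hδ hδ2
    have hm : Monotone (deriv (deriv f)) := monotone_of_deriv_nonneg hd3 h
    have hg := aux_mono (fun s => deriv f (y + s) + deriv f (y - s)) _
      (fun s => (aux_plus _ hd2 y s).add (aux_minus _ hd2 y s))
      (fun s hs => by
        have := hm (show y - s ≤ y + s by linarith)
        linarith)
    set a := (z - x) / 2 - δ with ha
    have ha0 : 0 ≤ a := by linarith
    have hk := aux_mono
      (fun b => (f ((y + a) + b) - f ((y - a) - b)) - (f (y + b) - f (y - b))) _
      (fun s => ((aux_plus _ hd1 (y + a) s).sub (aux_minus _ hd1 (y - a) s)).sub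
        ((aux_plus _ hd1 y s).sub (aux_minus _ hd1 y s)))
      (fun s hs => by
        have := hg (show s ∈ Set.Ici 0 from hs)
          (show a + s ∈ Set.Ici 0 from add_nonneg ha0 hs) (by linarith)
        simp only [← add_assoc, ← sub_sub] at this
        linarith)
    have := hk (show (0:ℝ) ∈ Set.Ici 0 from Set.self_mem_Ici)
      (show 2 * δ ∈ Set.Ici 0 from by simp [hδ]) (by linarith)
    simp only [add_zero, sub_zero] at this
    rw [show y + a + 2 * δ = z + δ by linarith, show y - a - 2 * δ = x - δ by linarith,
      show y + a = z - δ by linarith, show y - a = x + δ by linarith] at this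
    linarith
  · intro h y
    by_contra hneg
    push Not at hneg
    have hmid : ∀ b, 0 ≤ b → 0 ≤ deriv f (y + b) + deriv f (y - b) - 2 * deriv f y := by
      intro b hb
      by_contra hc
      push Not at hc
      have hd := ((aux_plus _ hd1 (y + b) 0).sub (aux_minus _ hd1 (y - b) 0)).sub
        ((aux_plus _ hd1 y 0).sub (aux_minus _ hd1 y 0)) |>.sub_const (f (y + b) - f (y - b))
      obtain ⟨ε, hε, hh⟩ := aux_neg_right _ _ hd (by simp) (by
        simp only [add_zero, sub_zero]
        linarith)
      have h1 := hh (ε / 2) (by linarith) (by linarith)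
      have h2 := h (y - (ε / 2 + b / 2)) y (y + (ε / 2 + b / 2)) (b / 2) (by linarith)
        (by linarith) (by ring) (by linarith) (by linarith)
      rw [show y - (ε / 2 + b / 2) - b / 2 = y - b - ε / 2 by ring,
        show y + 2 * (b / 2) = y + b by ring, show y - 2 * (b / 2) = y - b by ring,
        show y + (ε / 2 + b / 2) - b / 2 = y + ε / 2 by ring,
        show y - (ε / 2 + b / 2) + b / 2 = y - ε / 2 by ring,
        show y + (ε / 2 + b / 2) + b / 2 = y + b + ε / 2 by ring] at h2
      simp only [Pi.sub_apply] at h1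
      linarith
    obtain ⟨ε, hε, hh⟩ := aux_neg_right
      (fun s => deriv (deriv f) (y + s) - deriv (deriv f) (y - s)) _
      ((aux_plus _ hd3 y 0).sub (aux_minus _ hd3 y 0)) (by simp) (by
        simp only [add_zero, sub_zero]
        linarith)
    have hφ : ∀ s, HasDerivAt (fun s => deriv f (y + s) + deriv f (y - s)) _ s :=
      fun s => (aux_plus _ hd2 y s).add (aux_minus _ hd2 y s)
    obtain ⟨c, hc, hc2⟩ := exists_hasDerivAt_eq_slope
      (fun s => deriv f (y + s) + deriv f (y - s)) _ (show (0:ℝ) < ε / 2 by linarith)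
      (fun s _ => (hφ s).continuousAt.continuousWithinAt) (fun s _ => hφ s)
    have h1 := hh c hc.1 (by linarith [hc.2])
    have h2 := hmid (ε / 2) (by linarith)
    have h3 : 0 ≤ (deriv f (y + ε / 2) + deriv f (y - ε / 2)
        - (deriv f (y + 0) + deriv f (y - 0))) / (ε / 2 - 0) := by
      apply div_nonneg
      · simp only [add_zero, sub_zero]
        linarith
      · linarith
    rw [← hc2] at h3
    linarith
end

section
/- Let k ≥ 3, let f : [0,∞) → ℝ ∪ {+∞} be lower semicontinuous, proper and convex with f(1) < ∞ and f(0) = 0, and let K ≥ 0 be such that {p ∈ Δ_k : ∑_{i=1}^k f(p_i) < K} is nonempty. Put M_{f,K} = {p ∈ Δ_k : ∑_{i=1}^k f(p_i) ≤ K} and U(y) = min_{p ∈ M_{f,K}} ⟨p, y⟩ for y ∈ ℝ^k. Then: (i) if f(1) ≤ K, U is ambiguity prudent; and (ii) if f(1) > K and the conjugate f*(x) = sup_{q ≥ 0}(qx − f(q)) is finite-valued and three times differentiable on ℝ with (f*)'''(x) ≥ 0 for all x, then U is ambiguity prudent. -/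
/-- Lagrangian duality for the level-set problem. -/
lemma strong_dual_aux {k : ℕ} (hk : 3 ≤ k) (D : Set ℝ) (g : ℝ → ℝ) (hg : ConvexOn ℝ D g)
    (h0 : (0:ℝ) ∈ D) (h1 : (1:ℝ) ∈ D) (K : ℝ) (p0 : Fin k → ℝ) (hp0 : ∀ i, p0 i ∈ D)
    (hp0s : ∑ i, p0 i = 1) (hp0K : ∑ i, g (p0 i) < K) (y : Fin k → ℝ) (u : ℝ)
    (hu : ∀ p : Fin k → ℝ, (∀ i, p i ∈ D) → ∑ i, p i = 1 → ∑ i, g (p i) ≤ K →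
      u ≤ ∑ i, p i * y i) :
    ∃ l : ℝ, 0 ≤ l ∧ ∃ η : ℝ, ∀ p : Fin k → ℝ, (∀ i, p i ∈ D) →
      u ≤ ∑ i, p i * y i + l * (∑ i, g (p i) - K) - η * (∑ i, p i - 1) := by
  have hk' : (3:ℝ) ≤ k := by exact_mod_cast hk
  let A : Set (ℝ × ℝ × ℝ) := {z | ∃ p : Fin k → ℝ, (∀ i, p i ∈ D) ∧ z.1 = ∑ i, p i - 1 ∧
    ∑ i, g (p i) - K < z.2.1 ∧ ∑ i, p i * y i - u < z.2.2}
  have hA : Convex ℝ A := by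
    rintro z ⟨p, hp, hz1, hz2, hz3⟩ w ⟨q, hq, hw1, hw2, hw3⟩ a b ha hb hab
    refine ⟨fun i => a * p i + b * q i, fun i => hg.1 (hp i) (hq i) ha hb hab, ?_, ?_, ?_⟩
    · simp only [Prod.fst_add, Prod.smul_fst, smul_eq_mul, Finset.sum_add_distrib,
        ← Finset.mul_sum]
      rw [hz1, hw1]; linear_combination -hab
    · have h2 : ∑ i, g (a * p i + b * q i) ≤ a * ∑ i, g (p i) + b * ∑ i, g (q i) := by
        rw [Finset.mul_sum, Finset.mul_sum, ← Finset.sum_add_distrib]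
        exact Finset.sum_le_sum fun i _ => hg.2 (hp i) (hq i) ha hb hab
      simp only [Prod.snd_add, Prod.smul_snd, Prod.fst_add, Prod.smul_fst, smul_eq_mul]
      have hKK : K = a * K + b * K := by rw [← add_mul, hab, one_mul]
      rcases ha.eq_or_lt with h | h
      · have : b = 1 := by linarith
        subst this; subst h; linarith
      · nlinarith [mul_lt_mul_of_pos_left hz2 h, mul_le_mul_of_nonneg_left hw2.le hb]
    · have h2 : ∑ i, (a * p i + b * q i) * y i = a * ∑ i, p i * y i + b * ∑ i, q i * y i := by
        rw [Finset.mul_sum, Finset.mul_sum, ← Finset.sum_add_distrib]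
        exact Finset.sum_congr rfl fun i _ => by ring
      simp only [Prod.snd_add, Prod.smul_snd, smul_eq_mul]
      have hKK : u = a * u + b * u := by rw [← add_mul, hab, one_mul]
      rcases ha.eq_or_lt with h | h
      · have : b = 1 := by linarith
        subst this; subst h; linarith
      · nlinarith [mul_lt_mul_of_pos_left hz3 h, mul_le_mul_of_nonneg_left hw3.le hb]
  have h0A : (0 : ℝ × ℝ × ℝ) ∉ A := by
    rintro ⟨p, hp, hz1, hz2, hz3⟩
    simp only [Prod.fst_zero, Prod.snd_zero] at hz1 hz2 hz3
    have := hu p hp (by linarith) (by linarith)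
    linarith
  set Y := ∑ i, y i with hY
  have hint : (interior A).Nonempty := by
    let O : Set (ℝ × ℝ × ℝ) := Set.Ioo (-1) 1 ×ˢ
      (Set.Ioi ((k:ℝ) * (|g 0| + |g 1|) - K) ×ˢ Set.Ioi (|Y| - u))
    have hO : IsOpen O := isOpen_Ioo.prod (isOpen_Ioi.prod isOpen_Ioi)
    have hOA : O ⊆ A := by
      rintro ⟨s, c, r⟩ ⟨⟨hs1, hs2⟩, hc, hr⟩
      simp only [Set.mem_Ioi] at hs1 hs2 hc hr
      have hkp : (0:ℝ) < k := by linarith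
      set t := (s + 1) / k with ht
      have hkt : (k:ℝ) * t = s + 1 := by rw [ht]; field_simp
      have ht0 : 0 ≤ t := div_nonneg (by linarith) hkp.le
      have ht1 : t ≤ 1 := by rw [ht, div_le_one hkp]; linarith
      have e : (1 - t) • (0:ℝ) + t • (1:ℝ) = t := by simp
      have htD : t ∈ D := by
        have := hg.1 h0 h1 (sub_nonneg.2 ht1) ht0 (by ring)
        rwa [e] at this
      have hgt : g t ≤ |g 0| + |g 1| := by
        have := hg.2 h0 h1 (sub_nonneg.2 ht1) ht0 (by ring)
        rw [e] at this
        simp only [smul_eq_mul] at this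
        nlinarith [le_abs_self (g 0), le_abs_self (g 1), abs_nonneg (g 0), abs_nonneg (g 1)]
      refine ⟨fun _ => t, fun _ => htD, ?_, ?_, ?_⟩
      · simp [hkt]
      · simp only [Finset.sum_const, Finset.card_univ, Fintype.card_fin, nsmul_eq_mul]
        nlinarith
      · simp only [← Finset.mul_sum, ← hY]
        nlinarith [le_abs_self Y, abs_nonneg Y]
    refine ⟨(0, (k:ℝ) * (|g 0| + |g 1|) - K + 1, |Y| - u + 1), interior_maximal hOA hO ?_⟩
    refine ⟨⟨by norm_num, by norm_num⟩, ?_, ?_⟩ <;> simp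
  obtain ⟨F, hF0, hF⟩ := geometric_hahn_banach_of_nonempty_interior_point hA
    (fun h => h0A (interior_subset h)) hint
  rw [map_zero] at hF
  set α := F (1, 0, 0) with hα
  set β := F (0, 1, 0) with hβ
  set γ := F (0, 0, 1) with hγ
  have hFe : ∀ s c r : ℝ, F (s, c, r) = s * α + c * β + r * γ := by
    intro s c r
    have : ((s, c, r) : ℝ × ℝ × ℝ) = s • (1, 0, 0) + c • (0, 1, 0) + r • (0, 0, 1) := by
      simp
    rw [this, map_add, map_add, map_smul, map_smul, map_smul]; rfl
  have key : ∀ p : Fin k → ℝ, (∀ i, p i ∈ D) → ∀ c r : ℝ, 0 < c → 0 < r →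
      (∑ i, p i - 1) * α + (∑ i, g (p i) - K + c) * β + (∑ i, p i * y i - u + r) * γ ≤ 0 := by
    intro p hp c r hc hr
    rw [← hFe]
    exact hF _ ⟨p, hp, rfl, by simp [hc], by simp [hr]⟩
  have key2 : ∀ p : Fin k → ℝ, (∀ i, p i ∈ D) →
      (∑ i, p i - 1) * α + (∑ i, g (p i) - K) * β + (∑ i, p i * y i - u) * γ ≤ 0 := by
    intro p hp
    apply le_of_forall_pos_le_add
    intro ε hε
    have hd : 0 < |β| + |γ| + 1 := by positivity
    have hc : 0 < ε / (|β| + |γ| + 1) := by positivity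
    have := key p hp _ _ hc hc
    have e : ε = ε / (|β| + |γ| + 1) * (|β| + |γ| + 1) := by field_simp
    nlinarith [neg_abs_le β, neg_abs_le γ]
  have hlin : ∀ a b : ℝ, (∀ c : ℝ, 0 < c → a + c * b ≤ 0) → b ≤ 0 := by
    intro a b h
    by_contra hb
    push Not at hb
    have := h ((|a| + 1) / b) (by positivity)
    rw [div_mul_cancel₀ _ hb.ne'] at this
    linarith [neg_abs_le a]
  have hβ0 : β ≤ 0 := by
    apply hlin ((∑ i, p0 i - 1) * α + (∑ i, g (p0 i) - K) * β + (∑ i, p0 i * y i - u + 1) * γ)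
    intro c hc
    linarith [key p0 hp0 c 1 hc one_pos]
  have hγ0 : γ ≤ 0 := by
    apply hlin ((∑ i, p0 i - 1) * α + (∑ i, g (p0 i) - K + 1) * β + (∑ i, p0 i * y i - u) * γ)
    intro c hc
    linarith [key p0 hp0 1 c one_pos hc]
  have hγ1 : γ ≠ 0 := by
    intro hγz
    have hβz : β = 0 := by
      have := key2 p0 hp0
      rw [hγz, hp0s] at this
      nlinarith
    have hαz : α = 0 := by
      have a1 := key2 (fun _ => 0) (fun _ => h0)
      have a2 := key2 (fun _ => 1) (fun _ => h1)
      rw [hγz, hβz] at a1 a2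
      simp at a1 a2
      nlinarith
    apply hF0
    ext
    all_goals simp
    all_goals first | exact hαz | exact hβz | exact hγz
  have hγ2 : γ < 0 := lt_of_le_of_ne hγ0 hγ1
  refine ⟨β / γ, div_nonneg_of_nonpos hβ0 hγ0, -(α / γ), fun p hp => ?_⟩
  have h := key2 p hp
  have h' : 0 ≤ ((∑ i, p i - 1) * α + (∑ i, g (p i) - K) * β + (∑ i, p i * y i - u) * γ) / γ :=
    div_nonneg_of_nonpos h hγ0
  have e : ((∑ i, p i - 1) * α + (∑ i, g (p i) - K) * β + (∑ i, p i * y i - u) * γ) / γ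
      = (∑ i, p i * y i + β / γ * (∑ i, g (p i) - K) - -(α / γ) * (∑ i, p i - 1)) - u := by
    field_simp
    ring
  rw [e] at h'
  linarith

lemma convex_spread_aux {h : ℝ → ℝ} (hc : ConvexOn ℝ Set.univ h) (x s t : ℝ) (hs : 0 ≤ s)
    (hst : s ≤ t) : h (x + s) + h (x - s) ≤ h (x + t) + h (x - t) := by
  rcases (hs.trans hst).eq_or_lt with h0 | h0
  · have : s = 0 := by linarith
    subst this; subst h0; exact le_rfl
  have ha : 0 ≤ (t + s) / (2 * t) := by positivity
  have hb : 0 ≤ (t - s) / (2 * t) := div_nonneg (by linarith) (by linarith)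
  have hab : (t + s) / (2 * t) + (t - s) / (2 * t) = 1 := by field_simp; ring
  have h1 := hc.2 (Set.mem_univ (x + t)) (Set.mem_univ (x - t)) ha hb hab
  have h2 := hc.2 (Set.mem_univ (x + t)) (Set.mem_univ (x - t)) hb ha (by linarith)
  simp only [smul_eq_mul] at h1 h2
  rw [show (t + s) / (2 * t) * (x + t) + (t - s) / (2 * t) * (x - t) = x + s by
    field_simp; ring] at h1
  rw [show (t - s) / (2 * t) * (x + t) + (t + s) / (2 * t) * (x - t) = x - s by
    field_simp; ring] at h2
  have : (t + s) / (2 * t) = 1 - (t - s) / (2 * t) := by linarith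
  rw [this] at h1 h2
  linarith

lemma prudent_ineq_aux {h : ℝ → ℝ} (hd : Differentiable ℝ h)
    (hc : ConvexOn ℝ Set.univ (deriv h)) (x L d : ℝ) (hd0 : 0 < d) (hdL : 3 * d < L) :
    h (x + L - d) + h (x + 2 * d) + h (x - L - d) ≤
      h (x + L + d) + h (x - 2 * d) + h (x - L + d) := by
  let Φ : ℝ → ℝ := fun t => (h (x + L + t) + h (x - 2 * t) + h (x - L + t)) -
    (h (x + L - t) + h (x + 2 * t) + h (x - L - t))
  have hder : ∀ t, HasDerivAt Φ ((deriv h (x + L + t) * 1 + deriv h (x - 2 * t) * (-(2 * 1)) +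
      deriv h (x - L + t) * 1) - (deriv h (x + L - t) * (-1) + deriv h (x + 2 * t) * (2 * 1) +
      deriv h (x - L - t) * (-1))) t := by
    intro t
    have hh : ∀ z, HasDerivAt h (deriv h z) z := fun z => (hd z).hasDerivAt
    have i := hasDerivAt_id t
    have c1 := (hh (x + L + t)).comp t (i.const_add (x + L))
    have c2 := (hh (x - 2 * t)).comp t ((i.const_mul 2).const_sub x)
    have c3 := (hh (x - L + t)).comp t (i.const_add (x - L))
    have c4 := (hh (x + L - t)).comp t (i.const_sub (x + L))
    have c5 := (hh (x + 2 * t)).comp t ((i.const_mul 2).const_add x)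
    have c6 := (hh (x - L - t)).comp t (i.const_sub (x - L))
    exact ((c1.add c2).add c3).sub ((c4.add c5).add c6)
  have hmono : MonotoneOn Φ (Set.Icc 0 d) := by
    apply monotoneOn_of_deriv_nonneg (convex_Icc 0 d)
    · exact fun t _ => (hder t).continuousAt.continuousWithinAt
    · exact fun t _ => (hder t).differentiableAt.differentiableWithinAt
    · intro t ht
      rw [interior_Icc] at ht
      rw [(hder t).deriv]
      have a1 := convex_spread_aux hc x (2 * t) (L + t) (by linarith [ht.1]) (by linarith [ht.2])
      have a2 := convex_spread_aux hc x (2 * t) (L - t) (by linarith [ht.1]) (by linarith [ht.2])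
      rw [show x + (L + t) = x + L + t by ring, show x - (L + t) = x - L - t by ring] at a1
      rw [show x + (L - t) = x + L - t by ring, show x - (L - t) = x - L + t by ring] at a2
      linarith
  have := hmono (Set.left_mem_Icc.2 hd0.le) (Set.right_mem_Icc.2 hd0.le) hd0.le
  simp only [Φ, mul_zero, add_zero, sub_zero, sub_self] at this
  linarith

lemma ereal_sum_aux {k : ℕ} (F : Fin k → EReal) (hb : ∀ i, F i ≠ ⊥) (ht : ∀ i, F i ≠ ⊤) :
    ∑ i, F i = ((∑ i, (F i).toReal : ℝ) : EReal) := by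
  have : ∀ s : Finset (Fin k), ∑ i ∈ s, F i = ((∑ i ∈ s, (F i).toReal : ℝ) : EReal) := by
    intro s
    induction s using Finset.induction_on with
    | empty => simp
    | insert a s ha ih =>
      rw [Finset.sum_insert ha, Finset.sum_insert ha, ih, EReal.coe_add,
        EReal.coe_toReal (ht a) (hb a)]
  exact this _

lemma ereal_sum_bot_aux {k : ℕ} (F : Fin k → EReal) (hb : ∀ i, F i ≠ ⊥) (s : Finset (Fin k)) :
    ∑ i ∈ s, F i ≠ ⊥ := by
  induction s using Finset.induction_on with
  | empty => simp
  | insert a s ha ih =>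
    rw [Finset.sum_insert ha]
    simp [EReal.add_eq_bot_iff, hb, ih]

lemma ereal_ne_top_aux {k : ℕ} (F : Fin k → EReal) (hb : ∀ i, F i ≠ ⊥)
    (hs : ∑ i, F i ≠ ⊤) (i : Fin k) : F i ≠ ⊤ := by
  intro h
  apply hs
  rw [← Finset.add_sum_erase _ _ (Finset.mem_univ i), h]
  exact EReal.top_add_of_ne_bot (ereal_sum_bot_aux F hb _)

/-- If the value at the first profile is below every coordinate, prudence is immediate. -/
lemma min_case_aux {k : ℕ} (E : Finset (Fin k)) (ω₁ ω₂ ω₃ : Fin k) (u₁ u₂ u₃ ub : ℝ)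
    (y : Fin k → ℝ) (h1E : ω₁ ∉ E) (h2E : ω₂ ∉ E) (h3E : ω₃ ∉ E)
    (h12 : ω₁ ≠ ω₂) (h13 : ω₁ ≠ ω₃) (h23 : ω₂ ≠ ω₃)
    (hu12 : u₁ < u₂) (hu23 : u₂ < u₃) (hub : 0 < ub) (h3ub : 3 * ub < u₂ - u₁) (v : ℝ)
    (hv : ∀ i, v ≤ Function.update (Function.update (Function.update y ω₁ (u₁ - ub)) ω₂
      (u₂ + 2 * ub)) ω₃ (u₃ - ub) i) (p : Fin k → ℝ) (hp : p ∈ stdSimplex ℝ (Fin k)) :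
    v ≤ ∑ i, p i * Function.update (Function.update (Function.update y ω₁ (u₁ + ub)) ω₂
      (u₂ - 2 * ub)) ω₃ (u₃ + ub) i := by
  have hv1 : v ≤ u₁ - ub := by simpa [h12, h13] using hv ω₁
  have : v = ∑ i, p i * v := by rw [← Finset.sum_mul, hp.2, one_mul]
  rw [this]
  refine Finset.sum_le_sum fun i _ => mul_le_mul_of_nonneg_left ?_ (hp.1 i)
  by_cases i3 : i = ω₃
  · subst i3; simp; linarith
  by_cases i2 : i = ω₂
  · subst i2; simp [i3]; linarith
  by_cases i1 : i = ω₁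
  · subst i1; simp [i3, i2]; linarith
  simpa [i1, i2, i3] using hv i

lemma sum_three_aux {k : ℕ} (ω₁ ω₂ ω₃ : Fin k) (h12 : ω₁ ≠ ω₂) (h13 : ω₁ ≠ ω₃)
    (h23 : ω₂ ≠ ω₃) (y : Fin k → ℝ) (G : ℝ → ℝ) (a1 a2 a3 b1 b2 b3 : ℝ)
    (h : G b1 + G b2 + G b3 ≤ G a1 + G a2 + G a3) :
    ∑ i, G (Function.update (Function.update (Function.update y ω₁ b1) ω₂ b2) ω₃ b3 i) ≤
    ∑ i, G (Function.update (Function.update (Function.update y ω₁ a1) ω₂ a2) ω₃ a3 i) := by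
  rw [← sub_nonneg, ← Finset.sum_sub_distrib]
  rw [← Finset.sum_subset (Finset.subset_univ {ω₁, ω₂, ω₃})]
  · rw [Finset.sum_insert (by simp [h12, h13]), Finset.sum_insert (by simp [h23]),
      Finset.sum_singleton]
    simp [h12, h13, h23]
    linarith
  · intro i _ hi
    simp only [Finset.mem_insert, Finset.mem_singleton, not_or] at hi
    simp [hi.1, hi.2.1, hi.2.2]

/-- For k ≥ 3 and a lower semicontinuous, proper, convex
f : [0,∞) → ℝ ∪ {+∞} with f(1) < ∞, f(0) = 0, and K ≥ 0 such that
{p ∈ Δ_k : ∑ᵢ f(pᵢ) < K} ≠ ∅, let U(y) = min_{p ∈ M_{f,K}} ⟨p,y⟩ where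
M_{f,K} = {p ∈ Δ_k : ∑ᵢ f(pᵢ) ≤ K}. Then (i) if f(1) ≤ K, U is ambiguity prudent;
(ii) if f(1) > K and the conjugate f* is finite-valued, three times differentiable, and
(f*)''' ≥ 0, then U is ambiguity prudent. -/
theorem levelK_MEU_ambiguityPrudent
    {k : ℕ} (hk : 3 ≤ k)
    (f : ℝ → EReal)
    (hlsc : LowerSemicontinuousOn f (Set.Ici (0 : ℝ)))
    (hproper : ∀ x : ℝ, 0 ≤ x → f x ≠ ⊥)
    (hconv : ∀ x ∈ Set.Ici (0 : ℝ), ∀ y ∈ Set.Ici (0 : ℝ), ∀ a b : ℝ,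
      0 ≤ a → 0 ≤ b → a + b = 1 →
      f (a * x + b * y) ≤ (a : EReal) * f x + (b : EReal) * f y)
    (hf1 : f 1 < ⊤) (hf0 : f 0 = 0)
    (K : ℝ) (hK : 0 ≤ K)
    (hne : ∃ p ∈ stdSimplex ℝ (Fin k), (∑ i, f (p i)) < (K : EReal))
    (U : (Fin k → ℝ) → ℝ)
    (hU : ∀ y : Fin k → ℝ,
      IsLeast {v : ℝ | ∃ p ∈ stdSimplex ℝ (Fin k),
        (∑ i, f (p i)) ≤ (K : EReal) ∧ v = ∑ i, p i * y i} (U y)) :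
    (f 1 ≤ (K : EReal) → AmbiguityPrudent U) ∧
    ((K : EReal) < f 1 →
      ∀ fs : ℝ → ℝ,
        (∀ x : ℝ, IsLUB
          {v : ℝ | ∃ q : ℝ, 0 ≤ q ∧ (v : EReal) = ((q * x : ℝ) : EReal) - f q} (fs x)) →
        Differentiable ℝ fs →
        Differentiable ℝ (deriv fs) →
        Differentiable ℝ (deriv (deriv fs)) →
        (∀ x : ℝ, 0 ≤ deriv (deriv (deriv fs)) x) →
        AmbiguityPrudent U) := by
  have hprud : ∀ {p : Fin k → ℝ}, p ∈ stdSimplex ℝ (Fin k) → ∀ i, f (p i) ≠ ⊥ :=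
    fun hp i => hproper _ (hp.1 i)
  refine ⟨fun hf1K => ?_, fun _ fs hfs hd1 hd2 hd3 hd4 => ?_⟩
  · intro E ω₁ ω₂ ω₃ u₁ u₂ u₃ ub y h1E h2E h3E h12 h13 h23 hu12 hu23 _ hub h3ub _ _ _ _ _
    set yA := Function.update (Function.update (Function.update y ω₁ (u₁ - ub)) ω₂
      (u₂ + 2 * ub)) ω₃ (u₃ - ub) with hyA
    obtain ⟨p, hp, -, hpe⟩ := (hU (Function.update (Function.update (Function.update y ω₁
      (u₁ + ub)) ω₂ (u₂ - 2 * ub)) ω₃ (u₃ + ub))).1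
    rw [ge_iff_le, hpe]
    apply min_case_aux E ω₁ ω₂ ω₃ u₁ u₂ u₃ ub y h1E h2E h3E h12 h13 h23 hu12 hu23 hub h3ub _ _ p hp
    intro i
    rw [← hyA]
    refine (hU yA).2 ⟨Pi.single i 1, single_mem_stdSimplex ℝ i, ?_, ?_⟩
    · rw [Finset.sum_eq_single i]
      · simpa using hf1K
      · intro j _ hj
        simp [hj, hf0]
      · simp
    · rw [Finset.sum_eq_single i]
      · simp
      · intro j _ hj
        simp [hj]
      · simp
  · intro E ω₁ ω₂ ω₃ u₁ u₂ u₃ ub y h1E h2E h3E h12 h13 h23 hu12 hu23 hsp hub h3ub _ _ _ _ _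
    set yA := Function.update (Function.update (Function.update y ω₁ (u₁ - ub)) ω₂
      (u₂ + 2 * ub)) ω₃ (u₃ - ub) with hyA
    set yB := Function.update (Function.update (Function.update y ω₁ (u₁ + ub)) ω₂
      (u₂ - 2 * ub)) ω₃ (u₃ + ub) with hyB
    let D : Set ℝ := {q | 0 ≤ q ∧ f q ≠ ⊤}
    let g : ℝ → ℝ := fun q => (f q).toReal
    have hgf : ∀ q ∈ D, f q = ((g q : ℝ) : EReal) := fun q hq =>
      (EReal.coe_toReal hq.2 (hproper q hq.1)).symm
    have h0 : (0:ℝ) ∈ D := ⟨le_rfl, by simp [hf0]⟩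
    have h1 : (1:ℝ) ∈ D := ⟨zero_le_one, hf1.ne⟩
    have hcv : ∀ x ∈ D, ∀ z ∈ D, ∀ a b : ℝ, 0 ≤ a → 0 ≤ b → a + b = 1 →
        f (a * x + b * z) ≤ ((a * g x + b * g z : ℝ) : EReal) := by
      intro x hx z hz a b ha hb hab
      have := hconv x hx.1 z hz.1 a b ha hb hab
      rw [hgf x hx, hgf z hz] at this
      exact_mod_cast this
    have hDc : Convex ℝ D := by
      intro x hx z hz a b ha hb hab
      exact ⟨add_nonneg (mul_nonneg ha hx.1) (mul_nonneg hb hz.1),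
        ((hcv x hx z hz a b ha hb hab).trans_lt (EReal.coe_lt_top _)).ne⟩
    have hg : ConvexOn ℝ D g := by
      refine ⟨hDc, fun x hx z hz a b ha hb hab => ?_⟩
      have h := hcv x hx z hz a b ha hb hab
      have hm : a * x + b * z ∈ D := hDc hx hz ha hb hab
      rw [hgf _ hm] at h
      exact_mod_cast h
    have hmem : ∀ p ∈ stdSimplex ℝ (Fin k), ∑ i, f (p i) ≤ (K : EReal) → ∀ i, p i ∈ D := by
      intro p hp hpK i
      exact ⟨hp.1 i, ereal_ne_top_aux _ (hprud hp) (hpK.trans_lt (EReal.coe_lt_top K)).ne i⟩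
    have hsum : ∀ p : Fin k → ℝ, (∀ i, p i ∈ D) →
        ∑ i, f (p i) = ((∑ i, g (p i) : ℝ) : EReal) := by
      intro p hp
      exact ereal_sum_aux _ (fun i => hproper _ (hp i).1) (fun i => (hp i).2)
    obtain ⟨p0, hp0, hp0K⟩ := hne
    have hp0D := hmem p0 hp0 hp0K.le
    rw [hsum p0 hp0D] at hp0K
    obtain ⟨l, hl, η, hη⟩ := strong_dual_aux hk D g hg h0 h1 K p0 hp0D hp0.2
      (by exact_mod_cast hp0K) yA (U yA) (by
        intro p hp hps hpK
        refine (hU yA).2 ⟨p, ⟨fun i => (hp i).1, hps⟩, ?_, rfl⟩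
        rw [hsum p hp]
        exact_mod_cast hpK)
    obtain ⟨pB, hpB, hpBK, hpBe⟩ := (hU yB).1
    rw [ge_iff_le]
    rcases hl.eq_or_lt with hl0 | hl0
    · rw [hpBe]
      apply min_case_aux E ω₁ ω₂ ω₃ u₁ u₂ u₃ ub y h1E h2E h3E h12 h13 h23 hu12 hu23 hub h3ub _ _
        pB hpB
      intro i
      rw [← hyA]
      have hD' : ∀ j, (Pi.single i 1 : Fin k → ℝ) j ∈ D := by
        intro j
        by_cases hj : j = i
        · subst hj; simpa using h1
        · simpa [hj] using h0
      have h := hη (Pi.single i 1) hD'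
      rw [← hl0, (single_mem_stdSimplex ℝ i).2] at h
      rw [Finset.sum_eq_single i (by intro j _ hj; simp [hj]) (by simp)] at h
      simpa using h
    · have hstrong : l * ∑ i, fs ((η - yA i) / l) ≤ η - l * K - U yA := by
        apply le_of_forall_pos_le_add
        intro ε hε
        have hkp : (0:ℝ) < k := by
          have : 0 < k := by omega
          exact_mod_cast this
        have hε' : 0 < ε / (l * k) := by positivity
        have hex : ∀ i, ∃ q ∈ D, fs ((η - yA i) / l) - ε / (l * k) <
            q * ((η - yA i) / l) - g q := by
          intro i
          obtain ⟨v, ⟨q, hq, hv⟩, hlt, -⟩ := (hfs ((η - yA i) / l)).exists_between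
            (sub_lt_self _ hε')
          have hqD : q ∈ D := by
            refine ⟨hq, fun ht => ?_⟩
            rw [ht] at hv
            simp at hv
          refine ⟨q, hqD, ?_⟩
          rw [hgf q hqD] at hv
          have hv' : v = q * ((η - yA i) / l) - g q := by exact_mod_cast hv
          rwa [← hv']
        choose q hqD hq using hex
        have h := hη q hqD
        have hs : ∑ i, (fs ((η - yA i) / l) - ε / (l * k)) ≤
            ∑ i, (q i * ((η - yA i) / l) - g (q i)) := Finset.sum_le_sum fun i _ => (hq i).le
        have hs' := mul_le_mul_of_nonneg_left hs hl
        have e1 : l * ∑ i, (fs ((η - yA i) / l) - ε / (l * k)) =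
            l * ∑ i, fs ((η - yA i) / l) - ε := by
          rw [Finset.sum_sub_distrib, Finset.sum_const, Finset.card_univ, Fintype.card_fin,
            nsmul_eq_mul]
          field_simp
        have e2 : l * ∑ i, (q i * ((η - yA i) / l) - g (q i)) =
            η * ∑ i, q i - ∑ i, q i * yA i - l * ∑ i, g (q i) := by
          simp only [Finset.mul_sum]
          rw [← Finset.sum_sub_distrib, ← Finset.sum_sub_distrib]
          refine Finset.sum_congr rfl fun i _ => ?_
          field_simp
        rw [e1, e2] at hs'
        linarith
      have hweak : η - l * K - U yB ≤ l * ∑ i, fs ((η - yB i) / l) := by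
        have hpBD := hmem pB hpB hpBK
        rw [hsum pB hpBD] at hpBK
        have hK' : ∑ i, g (pB i) ≤ K := by exact_mod_cast hpBK
        have hs : ∑ i, (pB i * ((η - yB i) / l) - g (pB i)) ≤ ∑ i, fs ((η - yB i) / l) := by
          refine Finset.sum_le_sum fun i _ => (hfs _).1 ⟨pB i, hpB.1 i, ?_⟩
          rw [hgf _ (hpBD i)]
          norm_cast
        have hs' := mul_le_mul_of_nonneg_left hs hl
        have e2 : l * ∑ i, (pB i * ((η - yB i) / l) - g (pB i)) =
            η * ∑ i, pB i - ∑ i, pB i * yB i - l * ∑ i, g (pB i) := by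
          simp only [Finset.mul_sum]
          rw [← Finset.sum_sub_distrib, ← Finset.sum_sub_distrib]
          refine Finset.sum_congr rfl fun i _ => ?_
          field_simp
        rw [e2, hpB.2, ← hpBe] at hs'
        nlinarith [mul_le_mul_of_nonneg_left hK' hl]
      have hmid : ∑ i, fs ((η - yB i) / l) ≤ ∑ i, fs ((η - yA i) / l) := by
        apply sum_three_aux ω₁ ω₂ ω₃ h12 h13 h23 y (fun z => fs ((η - z) / l))
        have hc : ConvexOn ℝ Set.univ (deriv fs) :=
          convexOn_univ_of_deriv2_nonneg hd2 hd3 (fun x => hd4 x)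
        have h := prudent_ineq_aux hd1 hc ((η - u₂) / l) ((u₂ - u₁) / l) (ub / l)
          (by positivity) (by rw [← mul_div_assoc]; gcongr)
        have hu3 : u₃ = 2 * u₂ - u₁ := by linarith
        subst hu3
        convert h using 3 <;> (try congr 1) <;> field_simp <;> ring
      have := mul_le_mul_of_nonneg_left hmid hl
      linarith
end

section
/- Let k ≥ 3, ε ∈ [0,1] and α ∈ [0,1], and define the α-maxmin ε-contamination functional with uniform reference measure on {1,…,k} by U(y) = (1 − ε)·(1/k)∑_{i=1}^k y_i + ε·(α·min_{1 ≤ i ≤ k} y_i + (1 − α)·max_{1 ≤ i ≤ k} y_i) for y ∈ ℝ^k. Then U is ambiguity prudent. -/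
/-- For k ≥ 3, ε ∈ [0,1], α ∈ [0,1], the α-maxmin ε-contamination functional
U(y) = (1−ε)(1/k)∑ᵢ yᵢ + ε(α·minᵢ yᵢ + (1−α)·maxᵢ yᵢ) is ambiguity prudent. -/
theorem epsilonContamination_ambiguityPrudent
    {k : ℕ} (hk : 3 ≤ k)
    (ε α : ℝ) (hε : ε ∈ Set.Icc (0 : ℝ) 1) (hα : α ∈ Set.Icc (0 : ℝ) 1)
    (U : (Fin k → ℝ) → ℝ)
    (hU : ∀ y : Fin k → ℝ,
      U y = (1 - ε) * ((1 / (k : ℝ)) * ∑ i, y i) +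
        ε * (α * (⨅ i, y i) + (1 - α) * (⨆ i, y i))) :
    AmbiguityPrudent U := by
  intro E w1 w2 w3 u1 u2 u3 ub y _ _ _ h12 h13 h23 hu12 hu23 hd hub h3 hy1 hy2 hy3 _ _
  haveI : Nonempty (Fin k) := ⟨w1⟩
  have hform : ∀ a b c : ℝ, ∀ i,
      Function.update (Function.update (Function.update y w1 a) w2 b) w3 c i
        = if i = w3 then c else if i = w2 then b else if i = w1 then a else y i := by
    intro a b c i
    simp only [Function.update_apply]
  have hsum : ∀ a b c : ℝ,
      ∑ i, Function.update (Function.update (Function.update y w1 a) w2 b) w3 c i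
        = ∑ i, y i + (a - u1) + (b - u2) + (c - u3) := by
    intro a b c
    have : ∀ i, Function.update (Function.update (Function.update y w1 a) w2 b) w3 c i
        = y i + (if i = w1 then a - u1 else 0) + (if i = w2 then b - u2 else 0)
          + (if i = w3 then c - u3 else 0) := by
      intro i
      rw [hform]
      by_cases e3 : i = w3
      · subst e3
        simp [h13.symm, h23.symm, hy3]
      · by_cases e2 : i = w2
        · subst e2
          simp [h12.symm, h23, hy2]
        · by_cases e1 : i = w1
          · subst e1
            simp [h12, h13, hy1]
          · simp [e1, e2, e3]
    rw [Finset.sum_congr rfl (fun i _ => this i)]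
    simp [Finset.sum_add_distrib]
  rw [ge_iff_le, hU, hU, hsum, hsum]
  set A := Function.update (Function.update (Function.update y w1 (u1 - ub)) w2 (u2 + 2 * ub)) w3
    (u3 - ub) with hA
  set B := Function.update (Function.update (Function.update y w1 (u1 + ub)) w2 (u2 - 2 * ub)) w3
    (u3 + ub) with hB
  have hA' := hform (u1 - ub) (u2 + 2 * ub) (u3 - ub)
  have hB' := hform (u1 + ub) (u2 - 2 * ub) (u3 + ub)
  rw [← hA] at hA'
  rw [← hB] at hB'
  have hA1 : A w1 = u1 - ub := by rw [hA']; simp [h12, h13]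
  have hB3 : B w3 = u3 + ub := by rw [hB']; simp
  have hmin : (⨅ i, A i) ≤ ⨅ i, B i := by
    refine le_ciInf fun j => ?_
    have b := (Set.finite_range A).bddBelow
    have t1 := ciInf_le b w1
    have t2 := ciInf_le b j
    rw [hA1] at t1
    rw [hA' j] at t2
    rw [hB' j]
    split_ifs at * <;> linarith
  have hmax : (⨆ i, A i) ≤ ⨆ i, B i := by
    refine ciSup_le fun j => ?_
    have b := (Set.finite_range B).bddAbove
    have t1 := le_ciSup b w3
    have t2 := le_ciSup b j
    rw [hB3] at t1
    rw [hB' j] at t2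
    rw [hA' j]
    split_ifs at * <;> linarith
  have e : ∑ i, y i + (u1 - ub - u1) + (u2 + 2 * ub - u2) + (u3 - ub - u3)
      = ∑ i, y i + (u1 + ub - u1) + (u2 - 2 * ub - u2) + (u3 + ub - u3) := by ring
  rw [e]
  have h0 := hε.1
  have a0 := hα.1
  have a1 : 0 ≤ 1 - α := by linarith [hα.2]
  gcongr
end

section
/- Let k ≥ 2 and let φ : ℝ → ℝ be continuous. Define the second-order expected utility (SOEU) functional with uniform probability on {1,…,k} by U(y) = (1/k)∑_{i=1}^k φ(y_i) for y ∈ ℝ^k. Then U is ambiguity averse if and only if φ is concave. -/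
lemma aux_sum {k : ℕ} (φ : ℝ → ℝ) (y : Fin k → ℝ) (p q : Fin k) (h : p ≠ q) (a b : ℝ) :
    ∑ i, φ (Function.update (Function.update y p a) q b i) =
      φ a + φ b + ∑ i ∈ (Finset.univ.erase q).erase p, φ (y i) := by
  rw [← Finset.add_sum_erase Finset.univ _ (Finset.mem_univ q),
    ← Finset.add_sum_erase (Finset.univ.erase q) _ (Finset.mem_erase.2 ⟨h, Finset.mem_univ p⟩)]
  have : ∑ i ∈ (Finset.univ.erase q).erase p,
      φ (Function.update (Function.update y p a) q b i) =
      ∑ i ∈ (Finset.univ.erase q).erase p, φ (y i) := by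
    refine Finset.sum_congr rfl fun i hi => ?_
    simp only [Finset.mem_erase] at hi
    rw [Function.update_of_ne hi.2.1, Function.update_of_ne hi.1]
  rw [this, Function.update_self, Function.update_of_ne h, Function.update_self]
  ring

lemma aux_min (g : ℝ → ℝ) (hg : Continuous g)
    (hm : ∀ z h, 0 < h → g (z - h) + g (z + h) ≤ 2 * g z)
    (x y : ℝ) (hxy : g x = g y) (t : ℝ) (ht : t ∈ Set.Icc x y) : g x ≤ g t := by
  by_contra! hlt
  obtain ⟨m, hm1, hm2⟩ := (isCompact_Icc (a := x) (b := y)).exists_isMinOn ⟨t, ht⟩ hg.continuousOn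
  have hmin : ∀ s ∈ Set.Icc x y, g m ≤ g s := fun s hs => hm2 hs
  have hc : IsCompact (Set.Icc x y ∩ {s | g s = g m}) :=
    isCompact_Icc.inter_right (isClosed_eq hg continuous_const)
  obtain ⟨z, ⟨hz1, hz2⟩, hz3⟩ := hc.exists_isLeast ⟨m, hm1, rfl⟩
  have hz2 : g z = g m := hz2
  have h1 := hmin t ht
  have hxz : x < z := lt_of_le_of_ne hz1.1 (by rintro rfl; linarith)
  have hzy : z < y := lt_of_le_of_ne hz1.2 (by rintro rfl; linarith)
  set h := min (z - x) (y - z) with hh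
  have hpos : 0 < h := lt_min (by linarith) (by linarith)
  have ha : h ≤ z - x := min_le_left _ _
  have hb : h ≤ y - z := min_le_right _ _
  have h2 := hm z h hpos
  have h3 := hmin (z + h) ⟨by linarith, by linarith⟩
  have h4 := hmin (z - h) ⟨by linarith, by linarith⟩
  have h5 : g (z - h) = g m := by linarith
  have h6 : z ≤ z - h := hz3 ⟨⟨by linarith, by linarith⟩, h5⟩
  linarith

lemma aux_concave (f : ℝ → ℝ) (hf : Continuous f)
    (hm : ∀ z h, 0 < h → f (z - h) + f (z + h) ≤ 2 * f z) : ConcaveOn ℝ Set.univ f := by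
  refine LinearOrder.concaveOn_of_lt convex_univ ?_
  intro x _ y _ hxy a b ha hb hab
  obtain ⟨c, hc⟩ : ∃ c : ℝ, c * (y - x) = f y - f x :=
    ⟨(f y - f x) / (y - x), div_mul_cancel₀ _ (by linarith)⟩
  obtain rfl : a = 1 - b := by linarith
  have := aux_min (fun s => f s - c * s) (by fun_prop)
    (fun z h hh => by have := hm z h hh; linarith) x y (by linarith)
    ((1 - b) * x + b * y) ⟨by nlinarith, by nlinarith⟩
  simp only [smul_eq_mul] at this ⊢
  have e : b * (c * (y - x)) = b * (f y - f x) := by rw [hc]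
  linarith

/-- For k ≥ 2 and continuous φ : ℝ → ℝ, the SOEU functional
U(y) = (1/k)∑ᵢ φ(yᵢ) is ambiguity averse iff φ is concave. -/
theorem SOEU_ambiguityAverse_iff_concave
    {k : ℕ} (hk : 2 ≤ k)
    (φ : ℝ → ℝ) (hφ : Continuous φ) :
    AmbiguityAverse (fun y : Fin k → ℝ => (1 / (k : ℝ)) * ∑ i, φ (y i)) ↔
    ConcaveOn ℝ Set.univ φ := by
  have hk0 : (0 : ℝ) < 1 / (k : ℝ) := by
    have : 0 < k := by omega
    positivity
  constructor
  · intro H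
    have key : ∀ z h e, 0 < h → 0 < e → e < h →
        φ (z - h) + φ (z + h) ≤ φ (z - e) + φ (z + e) := by
      intro z h e hh he heh
      let p : Fin k := ⟨0, by omega⟩
      let q : Fin k := ⟨1, by omega⟩
      have hpq : p ≠ q := by simp [p, q]
      have := H ∅ p q (z - (h + e) / 2) (z + (h + e) / 2) ((h - e) / 2)
        (fun i => if i = p then z - (h + e) / 2 else if i = q then z + (h + e) / 2
          else z + h + 1) (by simp) (by simp) hpq (by linarith) (by linarith) (by linarith)
        (by simp) (by simp [hpq.symm]) (by simp)
        (by intro ω _ h1 h2; simp only [h1, h2, if_false]; linarith)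
      simp only [ge_iff_le] at this
      have := le_of_mul_le_mul_left this hk0
      rw [aux_sum _ _ _ _ hpq, aux_sum _ _ _ _ hpq] at this
      rw [show z - h = z - (h + e) / 2 - (h - e) / 2 by ring,
        show z + h = z + (h + e) / 2 + (h - e) / 2 by ring,
        show z - e = z - (h + e) / 2 + (h - e) / 2 by ring,
        show z + e = z + (h + e) / 2 - (h - e) / 2 by ring]
      linarith
    refine aux_concave φ hφ fun z h hh => ?_
    have hlim : Filter.Tendsto (fun e : ℝ => φ (z - e) + φ (z + e))
        (nhdsWithin 0 (Set.Ioi 0)) (nhds (2 * φ z)) := by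
      have hc : Continuous (fun e : ℝ => φ (z - e) + φ (z + e)) := by fun_prop
      have := (hc.tendsto 0).mono_left (nhdsWithin_le_nhds (s := Set.Ioi 0))
      simpa [two_mul] using this
    refine ge_of_tendsto hlim ?_
    filter_upwards [Ioo_mem_nhdsGT hh] with e he
    exact key z h e hh he.1 he.2
  · intro H E p q u v w y _ _ hpq huv hw hlt _ _ _ _
    simp only [ge_iff_le]
    refine mul_le_mul_of_nonneg_left ?_ hk0.le
    rw [aux_sum _ _ _ _ hpq, aux_sum _ _ _ _ hpq]
    have hd : 0 < v - u + 2 * w := by linarith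
    obtain ⟨t, ht⟩ : ∃ t : ℝ, t * (v - u + 2 * w) = 2 * w :=
      ⟨2 * w / (v - u + 2 * w), div_mul_cancel₀ _ hd.ne'⟩
    have ht0 : 0 ≤ t := by by_contra! h; nlinarith
    have ht1 : 0 ≤ 1 - t := by by_contra! h; nlinarith
    have h1 := H.2 (Set.mem_univ (u - w)) (Set.mem_univ (v + w)) ht1 ht0 (by ring)
    have h2 := H.2 (Set.mem_univ (u - w)) (Set.mem_univ (v + w)) ht0 ht1 (by ring)
    simp only [smul_eq_mul] at h1 h2
    rw [show (1 - t) * (u - w) + t * (v + w) = u + w by linear_combination ht] at h1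
    rw [show t * (u - w) + (1 - t) * (v + w) = v - w by linear_combination -ht] at h2
    linarith
end

section
/- Let k ≥ 3 and let φ : ℝ → ℝ be three times differentiable. Define the second-order expected utility (SOEU) functional with uniform probability on {1,…,k} by U(y) = (1/k)∑_{i=1}^k φ(y_i) for y ∈ ℝ^k. Then U is ambiguity prudent if and only if φ'''(t) ≥ 0 for all t ∈ ℝ. -/
lemma aux_sum_update {k : ℕ} (φ : ℝ → ℝ) (y : Fin k → ℝ) (i : Fin k) (b : ℝ) :
    ∑ j, φ (Function.update y i b j) = ∑ j, φ (y j) - φ (y i) + φ b := by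
  have h1 := Finset.add_sum_erase Finset.univ (fun j => φ (y j)) (Finset.mem_univ i)
  have h2 := Finset.add_sum_erase Finset.univ (fun j => φ (Function.update y i b j))
    (Finset.mem_univ i)
  have h3 : ∑ j ∈ Finset.univ.erase i, φ (Function.update y i b j)
      = ∑ j ∈ Finset.univ.erase i, φ (y j) := by
    refine Finset.sum_congr rfl fun j hj => ?_
    rw [Function.update_of_ne (Finset.ne_of_mem_erase hj)]
  simp only [Function.update_self] at h1 h2
  linarith

lemma aux_sum_update3 {k : ℕ} (φ : ℝ → ℝ) (y : Fin k → ℝ) (i j l : Fin k) (a b c : ℝ)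
    (hij : i ≠ j) (hil : i ≠ l) (hjl : j ≠ l) :
    ∑ n, φ (Function.update (Function.update (Function.update y i a) j b) l c n)
      = ∑ n, φ (y n) - φ (y i) - φ (y j) - φ (y l) + (φ a + φ b + φ c) := by
  rw [aux_sum_update, aux_sum_update, aux_sum_update]
  rw [Function.update_of_ne hjl.symm, Function.update_of_ne hil.symm,
    Function.update_of_ne hij.symm]
  ring

/-- The scalar inequality equivalent to prudence. -/
def auxIneq (φ : ℝ → ℝ) : Prop :=
  ∀ m d h : ℝ, 0 < h → 3 * h < d →
    φ (m - d - h) + φ (m + 2 * h) + φ (m + d - h) ≤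
      φ (m - d + h) + φ (m - 2 * h) + φ (m + d + h)

lemma aux_prudent_iff {k : ℕ} (hk : 3 ≤ k) (φ : ℝ → ℝ) :
    AmbiguityPrudent (fun y : Fin k → ℝ => (1 / (k : ℝ)) * ∑ i, φ (y i)) ↔ auxIneq φ := by
  have hk0 : (0 : ℝ) < 1 / (k : ℝ) := by
    have : 0 < k := by omega
    positivity
  constructor
  · intro H m d h hh hd
    have n01 : (⟨0, by omega⟩ : Fin k) ≠ ⟨1, by omega⟩ := by simp
    have n02 : (⟨0, by omega⟩ : Fin k) ≠ ⟨2, by omega⟩ := by simp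
    have n12 : (⟨1, by omega⟩ : Fin k) ≠ ⟨2, by omega⟩ := by simp
    have := H ∅ ⟨0, by omega⟩ ⟨1, by omega⟩ ⟨2, by omega⟩ (m - d) m (m + d) h
      (Function.update (Function.update (Function.update (fun _ => m + d + h + 1)
        ⟨0, by omega⟩ (m - d)) ⟨1, by omega⟩ m) ⟨2, by omega⟩ (m + d))
      (by simp) (by simp) (by simp) n01 n02 n12 (by linarith) (by linarith) (by ring) hh
      (by linarith)
      (by rw [Function.update_of_ne n02, Function.update_of_ne n01, Function.update_self])
      (by rw [Function.update_of_ne n12, Function.update_self])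
      (by rw [Function.update_self])
      (by simp)
      (by
        intro ω _ h1 h2 h3
        rw [Function.update_of_ne h3, Function.update_of_ne h2, Function.update_of_ne h1]
        linarith)
    simp only [ge_iff_le] at this
    have := le_of_mul_le_mul_left this hk0
    simp only [aux_sum_update3 _ _ _ _ _ _ _ _ n01 n02 n12] at this
    linarith
  · intro H E ω₁ ω₂ ω₃ u₁ u₂ u₃ ub y _ _ _ h12 h13 h23 _ _ hu hub h3 _ _ _ _ _
    simp only [ge_iff_le]
    refine mul_le_mul_of_nonneg_left ?_ hk0.le
    rw [aux_sum_update3 _ _ _ _ _ _ _ _ h12 h13 h23,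
      aux_sum_update3 _ _ _ _ _ _ _ _ h12 h13 h23]
    have := H u₂ (u₂ - u₁) ub hub h3
    have e : u₃ = u₂ + (u₂ - u₁) := by linarith
    have e' : u₁ = u₂ - (u₂ - u₁) := by ring
    rw [← e, ← e'] at this
    linarith

lemma aux_hasDeriv (φ : ℝ → ℝ) (hd1 : Differentiable ℝ φ) (a c h : ℝ) :
    HasDerivAt (fun h => φ (a + c * h)) (c * deriv φ (a + c * h)) h := by
  have h1 : HasDerivAt (fun h : ℝ => a + c * h) c h := by
    simpa using ((hasDerivAt_id h).const_mul c).const_add a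
  have := (hd1 (a + c * h)).hasDerivAt.comp h h1
  rw [mul_comm] at this
  exact this

lemma aux_D (φ : ℝ → ℝ) (hd1 : Differentiable ℝ φ) (m d h : ℝ) :
    HasDerivAt (fun h => φ (m - d + 1 * h) + φ (m + (-2) * h) + φ (m + d + 1 * h)
      - (φ (m - d + (-1) * h) + φ (m + 2 * h) + φ (m + d + (-1) * h)))
      (1 * deriv φ (m - d + 1 * h) + (-2) * deriv φ (m + (-2) * h)
        + 1 * deriv φ (m + d + 1 * h)
      - ((-1) * deriv φ (m - d + (-1) * h) + 2 * deriv φ (m + 2 * h)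
        + (-1) * deriv φ (m + d + (-1) * h))) h :=
  (((aux_hasDeriv φ hd1 _ _ h).add (aux_hasDeriv φ hd1 _ _ h)).add
    (aux_hasDeriv φ hd1 _ _ h)).sub
  (((aux_hasDeriv φ hd1 _ _ h).add (aux_hasDeriv φ hd1 _ _ h)).add
    (aux_hasDeriv φ hd1 _ _ h))

lemma aux_forward (φ : ℝ → ℝ) (hd1 : Differentiable ℝ φ) (H : auxIneq φ) (m d : ℝ)
    (hd : 0 < d) : 0 ≤ deriv φ (m + d) + deriv φ (m - d) - 2 * deriv φ m := by
  have h1 := (aux_D φ hd1 m d 0).tendsto_slope_zero_right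
  have h2 := ge_of_tendsto (b := 0) h1 (by
    filter_upwards [Ioo_mem_nhdsGT (show (0 : ℝ) < d / 3 by positivity)] with t ht
    have := H m d t ht.1 (by linarith [ht.2])
    have hp : 0 ≤ t⁻¹ := by have := ht.1; positivity
    refine mul_nonneg hp ?_
    simp only [zero_add, mul_zero, add_zero, one_mul, neg_mul, ← sub_eq_add_neg]
    linarith)
  simp only [mul_zero, add_zero] at h2
  linarith

lemma aux_second (g : ℝ → ℝ) (hg : Differentiable ℝ g) (hg' : Differentiable ℝ (deriv g))
    (m : ℝ) (H : ∀ d, 0 < d → 0 ≤ g (m + d) + g (m - d) - 2 * g m) :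
    0 ≤ deriv (deriv g) m := by
  by_contra! hneg
  have hF : ∀ d, HasDerivAt (fun d => g (m + 1 * d) + g (m + (-1) * d))
      (1 * deriv g (m + 1 * d) + (-1) * deriv g (m + (-1) * d)) d := fun d =>
    (aux_hasDeriv g hg m 1 d).add (aux_hasDeriv g hg m (-1) d)
  have h1 := (((aux_hasDeriv (deriv g) hg' m 1 0).sub
    (aux_hasDeriv (deriv g) hg' m (-1) 0))).tendsto_slope_zero_right
  have h2 := h1.eventually_lt_const (u := 0) (by simp only [mul_zero, add_zero]; linarith)
  obtain ⟨e, he, hs⟩ := mem_nhdsGT_iff_exists_Ioo_subset.1 h2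
  have he0 : (0 : ℝ) < e := he
  have hanti : StrictAntiOn (fun d => g (m + 1 * d) + g (m + (-1) * d)) (Set.Icc 0 (e / 2)) := by
    refine strictAntiOn_of_deriv_neg (convex_Icc _ _)
      (fun x _ => (hF x).continuousAt.continuousWithinAt) ?_
    intro x hx
    rw [interior_Icc] at hx
    rw [(hF x).deriv]
    have hx2 : x ∈ Set.Ioo 0 e := ⟨hx.1, by linarith [hx.2]⟩
    have h3 := hs hx2
    simp only [Set.mem_ofPred_eq, smul_eq_mul, Pi.sub_apply, mul_zero, add_zero, zero_add] at h3
    have h4 := lt_of_mul_lt_mul_left (h3.trans_eq (mul_zero x⁻¹).symm) (inv_pos.2 hx.1).le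
    linarith
  have h5 := hanti (Set.left_mem_Icc.2 (by positivity)) (Set.right_mem_Icc.2 (by positivity))
    (show (0 : ℝ) < e / 2 by positivity)
  have h6 := H (e / 2) (by positivity)
  simp only [mul_zero, add_zero, one_mul, neg_mul, ← sub_eq_add_neg] at h5
  linarith

lemma aux_convex (g : ℝ → ℝ) (hg : ConvexOn ℝ Set.univ g) (m s r : ℝ) (hs : 0 ≤ s)
    (hr : s ≤ r) : g (m + s) + g (m - s) ≤ g (m + r) + g (m - r) := by
  rcases hr.eq_or_lt with rfl | hlt
  · exact le_rfl
  have hr0 : 0 < r := by linarith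
  have ha : 0 ≤ (r + s) / (2 * r) := by positivity
  have hb : 0 ≤ (r - s) / (2 * r) := div_nonneg (by linarith) (by positivity)
  have hab : (r + s) / (2 * r) + (r - s) / (2 * r) = 1 := by field_simp; ring
  have h1 := hg.2 (Set.mem_univ (m + r)) (Set.mem_univ (m - r)) ha hb hab
  have h2 := hg.2 (Set.mem_univ (m - r)) (Set.mem_univ (m + r)) ha hb hab
  simp only [smul_eq_mul] at h1 h2
  have e1 : (r + s) / (2 * r) * (m + r) + (r - s) / (2 * r) * (m - r) = m + s := by
    field_simp; ring
  have e2 : (r + s) / (2 * r) * (m - r) + (r - s) / (2 * r) * (m + r) = m - s := by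
    field_simp; ring
  rw [e1] at h1
  rw [e2] at h2
  have h3 : (r + s) / (2 * r) * (g (m + r) + g (m - r))
      + (r - s) / (2 * r) * (g (m + r) + g (m - r)) = g (m + r) + g (m - r) := by
    rw [← add_mul, hab, one_mul]
  linarith

lemma aux_backward (φ : ℝ → ℝ) (hd1 : Differentiable ℝ φ)
    (hc : ConvexOn ℝ Set.univ (deriv φ)) : auxIneq φ := by
  intro m d h hh hd
  have hm : MonotoneOn (fun h => φ (m - d + 1 * h) + φ (m + (-2) * h) + φ (m + d + 1 * h)
      - (φ (m - d + (-1) * h) + φ (m + 2 * h) + φ (m + d + (-1) * h))) (Set.Icc 0 h) := by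
    refine monotoneOn_of_deriv_nonneg (convex_Icc _ _)
      (fun x _ => (aux_D φ hd1 m d x).continuousAt.continuousWithinAt)
      (fun x _ => (aux_D φ hd1 m d x).differentiableAt.differentiableWithinAt) ?_
    intro x hx
    rw [interior_Icc] at hx
    rw [(aux_D φ hd1 m d x).deriv]
    have h1 := aux_convex _ hc m (2 * x) (d - x) (by linarith [hx.1]) (by linarith [hx.2])
    have h2 := aux_convex _ hc m (2 * x) (d + x) (by linarith [hx.1]) (by linarith [hx.1, hx.2])
    rw [show m + (d - x) = m + d + (-1) * x by ring, show m - (d - x) = m - d + 1 * x by ring,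
      show m - 2 * x = m + (-2) * x by ring] at h1
    rw [show m + (d + x) = m + d + 1 * x by ring, show m - (d + x) = m - d + (-1) * x by ring,
      show m - 2 * x = m + (-2) * x by ring] at h2
    linarith
  have := hm (Set.left_mem_Icc.2 hh.le) (Set.right_mem_Icc.2 hh.le) hh.le
  simp only [mul_zero, add_zero, one_mul, neg_mul, ← sub_eq_add_neg] at this
  linarith

/-- For k ≥ 3 and three times differentiable φ : ℝ → ℝ, the SOEU functional
U(y) = (1/k)∑ᵢ φ(yᵢ) is ambiguity prudent iff φ''' ≥ 0 everywhere. -/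
theorem SOEU_ambiguityPrudent_iff_third_deriv_nonneg
    {k : ℕ} (hk : 3 ≤ k)
    (φ : ℝ → ℝ)
    (hd1 : Differentiable ℝ φ)
    (hd2 : Differentiable ℝ (deriv φ))
    (hd3 : Differentiable ℝ (deriv (deriv φ))) :
    AmbiguityPrudent (fun y : Fin k → ℝ => (1 / (k : ℝ)) * ∑ i, φ (y i)) ↔
    (∀ t : ℝ, 0 ≤ deriv (deriv (deriv φ)) t) := by
  rw [aux_prudent_iff hk]
  constructor
  · intro H t
    exact aux_second (deriv φ) hd2 hd3 t fun d hd => aux_forward φ hd1 H t d hd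
  · intro H
    refine aux_backward φ hd1 ?_
    exact (monotone_of_deriv_nonneg hd3 H).convexOn_univ_of_deriv hd2
end
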